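/- arXiv:math/0005062 — 2 statements merged into one kernel-verified Lean document; each statement's English description precedes it below -/
import Mathlib

section
/- Let 𝒫 be a nonempty admissible and linearly repetitive set of abstract patterns in ℝ^d, and let F be a subadditive function on the set 𝒫_B of abstract box-patterns derived from 𝒫. Then the limits lim_{r→∞} F⁺(r) and lim_{r→∞} F⁻(r) exist in ℝ and are equal. Consequently there exists L ∈ ℝ such that F(P)/|P| → L as |P| → ∞ along 𝒫_∞, i.e. for every ε > 0 there is V > 0 such that |F(P)/|P| − L| < ε for every P ∈ 𝒫_∞ with |P| ≥ V. -/
open Metric Set Filter MeasureTheory Topology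

noncomputable section

/-- Points of `ℝ^d`. -/
abbrev Pt (d : ℕ) := EuclideanSpace ℝ (Fin d)

variable (d : ℕ)

/-- A tile: a subset of `ℝ^d` homeomorphic to the closed unit ball. -/
def IsTile (m : Set (Pt d)) : Prop :=
  Nonempty (m ≃ₜ (Metric.closedBall (0 : Pt d) 1))

/-- A pattern: a finite nonempty collection of tiles whose interiors are pairwise disjoint. -/
def IsPattern (M : Set (Set (Pt d))) : Prop :=
  M.Finite ∧ M.Nonempty ∧ (∀ m ∈ M, IsTile d m) ∧
    M.Pairwise fun m m' => interior m ∩ interior m' = ∅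

/-- A tiling of `ℝ^d`: a collection of tiles with pairwise disjoint interiors covering `ℝ^d`. -/
def IsTiling (T : Set (Set (Pt d))) : Prop :=
  (∀ m ∈ T, IsTile d m) ∧
    (T.Pairwise fun m m' => interior m ∩ interior m' = ∅) ∧ ⋃₀ T = Set.univ

/-- Translation of a pattern by `t`. -/
def patTrans (t : Pt d) (M : Set (Set (Pt d))) : Set (Set (Pt d)) :=
  (fun m => (fun x => x + t) '' m) '' M

/-- Support (underlying set) of a pattern. -/
def supp (M : Set (Set (Pt d))) : Set (Pt d) := ⋃₀ M

/-- Inner radius: the largest `r` such that some closed ball of radius `r` fits inside `s(M)`. -/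
def rIn (M : Set (Set (Pt d))) : ℝ :=
  sSup {r : ℝ | ∃ x : Pt d, Metric.closedBall x r ⊆ supp d M}

/-- Outer radius: the smallest `r` such that some closed ball of radius `r` contains `s(M)`. -/
def rOut (M : Set (Set (Pt d))) : ℝ :=
  sInf {r : ℝ | ∃ x : Pt d, supp d M ⊆ Metric.closedBall x r}

/-- The pattern class of `P` is a subpattern of (the class of) `Q`:
some translate of `P` is contained in `Q`. -/
def SubpatternClass (P Q : Set (Set (Pt d))) : Prop :=
  ∃ t : Pt d, patTrans d t P ⊆ Q

/-- A set of abstract patterns is modelled as a translation-closed set `Ps` of concrete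
patterns (the union of the pattern classes).  `Admissible` encodes conditions
(i)–(iii) of Definition 2.1. -/
structure Admissible (Ps : Set (Set (Set (Pt d)))) : Prop where
  pattern : ∀ P ∈ Ps, IsPattern d P
  transClosed : ∀ (t : Pt d), ∀ P ∈ Ps, patTrans d t P ∈ Ps
  subClosed : ∀ P ∈ Ps, ∀ Q : Set (Set (Pt d)), IsPattern d Q → Q ⊆ P → Q ∈ Ps
  tileBounds : ∃ rmin rmax : ℝ, 0 < rmin ∧ rmin ≤ rmax ∧
    ∀ m : Set (Pt d), ({m} : Set (Set (Pt d))) ∈ Ps →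
      rmin ≤ rIn d {m} ∧ rIn d {m} ≤ rOut d {m} ∧ rOut d {m} ≤ rmax
  extend : ∀ P ∈ Ps, (0 : Pt d) ∈ supp d P → ∀ r : ℝ, 0 < r →
    ∃ Q ∈ Ps, P ⊆ Q ∧ Metric.closedBall (0 : Pt d) r ⊆ supp d Q

/-- Linear repetitivity of a (translation-closed) set of patterns. -/
def LinearlyRepetitive (Ps : Set (Set (Set (Pt d)))) : Prop :=
  ∃ c : ℝ, 0 < c ∧ ∀ P ∈ Ps, 1 ≤ rOut d P →
    ∀ Q ∈ Ps, c * rOut d P ≤ rIn d Q → SubpatternClass d P Q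

/-- The box determined by corner functions `a b : Fin d → ℝ`. -/
def boxSet (a b : Fin d → ℝ) : Set (Pt d) := {x | ∀ j, x j ∈ Set.Icc (a j) (b j)}

/-- `B` is a box. -/
def IsBox (B : Set (Pt d)) : Prop :=
  ∃ a b : Fin d → ℝ, (∀ j, a j < b j) ∧ B = boxSet d a b

/-- `B` is an `r`-box: all side lengths lie in `[r, 2r]`. -/
def IsRBox (r : ℝ) (B : Set (Pt d)) : Prop :=
  ∃ a b : Fin d → ℝ, (∀ j, a j < b j) ∧ B = boxSet d a b ∧
    ∀ j, r ≤ b j - a j ∧ b j - a j ≤ 2 * r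

/-- Width of a box: the minimum of its side lengths. -/
def widthOf (B : Set (Pt d)) : ℝ :=
  ⨅ j : Fin d, (sSup ((fun x : Pt d => x j) '' B) - sInf ((fun x : Pt d => x j) '' B))

/-- Volume of a subset of `ℝ^d`. -/
def volOf (B : Set (Pt d)) : ℝ := (volume B).toReal

/-- Restriction `M ∩ B` of a pattern or tiling `M` to `B`. -/
def patRestrict (M : Set (Set (Pt d))) (B : Set (Pt d)) : Set (Set (Pt d)) :=
  {s | ∃ m ∈ M, (m ∩ interior B).Nonempty ∧ s = m ∩ B}

/-- The set `Ps_B` of box-patterns derived from `Ps` (concrete representatives). -/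
def BoxPatterns (Ps : Set (Set (Set (Pt d)))) : Set (Set (Set (Pt d))) :=
  {Q | ∃ P ∈ Ps, ∃ B : Set (Pt d), IsBox d B ∧ B ⊆ supp d P ∧ Q = patRestrict d P B}

/-- The set `Ps(r)` of `r`-patterns derived from `Ps`. -/
def RPatterns (Ps : Set (Set (Set (Pt d)))) (r : ℝ) : Set (Set (Set (Pt d))) :=
  {Q | ∃ P ∈ Ps, ∃ B : Set (Pt d), IsRBox d r B ∧ B ⊆ supp d P ∧ Q = patRestrict d P B}

/-- Width of a box-pattern. -/
def patWidth (M : Set (Set (Pt d))) : ℝ := widthOf d (supp d M)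

/-- Volume of a box-pattern. -/
def patVol (M : Set (Set (Pt d))) : ℝ := volOf d (supp d M)

/-- A subadditive function on `Ps_B`, with constants `dF, rF` and error function `cF`.
`F` is defined on concrete patterns and is translation-invariant (i.e. well defined on
pattern classes). -/
structure SubadditiveOn (Ps : Set (Set (Set (Pt d)))) (F : Set (Set (Pt d)) → ℝ)
    (dF rF : ℝ) (cF : ℝ → ℝ) : Prop where
  invariant : ∀ (t : Pt d), ∀ M ∈ BoxPatterns d Ps, F (patTrans d t M) = F M
  dF_nonneg : 0 ≤ dF
  rF_nonneg : 0 ≤ rF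
  cF_anti : ∀ r s : ℝ, rF ≤ r → r ≤ s → cF s ≤ cF r
  cF_lim : Tendsto cF atTop (nhds 0)
  subadd : ∀ M ∈ BoxPatterns d Ps, ∀ (n : ℕ) (Bj : Fin n → Set (Pt d)),
    (∀ j, IsBox d (Bj j)) →
    (∀ i j, i ≠ j → interior (Bj i) ∩ interior (Bj j) = ∅) →
    (⋃ j, Bj j) = supp d M →
    (∀ j, rF ≤ widthOf d (Bj j)) →
    F M ≤ (∑ j, F (patRestrict d M (Bj j))) +
      ∑ j, cF (widthOf d (Bj j)) * volOf d (Bj j)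
  bound : ∀ M ∈ BoxPatterns d Ps, |F M| ≤ dF * patVol d M

/-- The upper mean `F⁺(r)`. -/
def Fplus (Ps : Set (Set (Set (Pt d)))) (F : Set (Set (Pt d)) → ℝ) (r : ℝ) : ℝ :=
  sSup ((fun P => F P / patVol d P) '' RPatterns d Ps r)

/-- The lower mean `F⁻(r)`. -/
def Fminus (Ps : Set (Set (Set (Pt d)))) (F : Set (Set (Pt d)) → ℝ) (r : ℝ) : ℝ :=
  sInf ((fun P => F P / patVol d P) '' RPatterns d Ps r)


theorem lag_det {n : ℕ} (s : Finset ℝ) (hs : n < s.card) :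
  ∃ w : ℝ → ℝ, ∑ t ∈ s, w t = 1 ∧ ∀ A : EuclideanSpace ℝ (Fin n) →L[ℝ] EuclideanSpace ℝ (Fin n),
    (1 + A).det = ∑ t ∈ s, w t * (1 + t • A).det := by
  have hsne : s.Nonempty := Finset.card_pos.mp (by omega)
  refine ⟨fun t => (Lagrange.basis s id t).eval 1, ?_, ?_⟩
  · rw [← Polynomial.eval_finsetSum, Lagrange.sum_basis (Set.injOn_id _) hsne]; simp
  · intro A
    let b := (EuclideanSpace.basisFun (Fin n) ℝ).toBasis
    let MA := LinearMap.toMatrix b b (A : EuclideanSpace ℝ (Fin n) →ₗ[ℝ] _)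
    let q : Polynomial ℝ := Matrix.det ((Polynomial.X : Polynomial ℝ) • MA.map Polynomial.C + (1 : Matrix (Fin n) (Fin n) ℝ).map Polynomial.C)
    have hev : ∀ t : ℝ, q.eval t = (1 + t • A).det := by
      intro t
      have h1 : (1 + t • A).det = Matrix.det (1 + t • MA) := by
        rw [ContinuousLinearMap.det, ← LinearMap.det_toMatrix b]
        congr 1
        simp [MA]
      rw [h1]
      simp only [q]
      rw [← Polynomial.coe_evalRingHom, RingHom.map_det]
      congr 1
      ext i j
      by_cases hij : i = j <;> (simp [hij, add_comm]; ring)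
    have hdeg : q.degree < s.card := by
      have : q.natDegree ≤ Fintype.card (Fin n) :=
        Polynomial.natDegree_det_X_add_C_le MA (1 : Matrix (Fin n) (Fin n) ℝ)
      rw [Fintype.card_fin] at this
      refine lt_of_le_of_lt Polynomial.degree_le_natDegree ?_
      exact_mod_cast lt_of_le_of_lt this hs
    have h2 := Lagrange.eq_interpolate (v := id) (Set.injOn_id _) hdeg
    have h3 := hev 1
    rw [one_smul] at h3
    rw [← h3, h2, Lagrange.interpolate_apply, Polynomial.eval_finsetSum]
    refine Finset.sum_congr rfl fun t ht => ?_
    simp [hev, mul_comm]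

theorem glue_lipschitz {E : Type*} [NormedAddCommGroup E] [NormedSpace ℝ E] (g : E → E) (K : NNReal)
    (hg : LipschitzOnWith K g (closedBall 0 1)) (h0 : ∀ x, ‖x‖ = 1 → g x = 0) :
    LipschitzWith K (fun x => if ‖x‖ ≤ 1 then g x else 0) := by
  have key : ∀ x y : E, ‖x‖ ≤ 1 → 1 < ‖y‖ → ‖g x‖ ≤ K * ‖x - y‖ := by
    intro x y hx hy
    have hc : ContinuousOn (fun t : ℝ => ‖x + t • (y - x)‖) (Icc 0 1) := by fun_prop
    have := intermediate_value_Icc (zero_le_one) hc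
    have h1 : (1:ℝ) ∈ Icc (‖x + (0:ℝ) • (y - x)‖) (‖x + (1:ℝ) • (y - x)‖) := by
      simp [hx, hy.le]
    obtain ⟨t, ht, hz⟩ := this h1
    have hz' : ‖x + t • (y - x)‖ = 1 := hz
    have := hg.dist_le_mul x (by simpa using hx) (x + t • (y - x)) (by simp [hz'])
    rw [h0 _ hz', dist_zero_right, dist_eq_norm] at this
    refine this.trans ?_
    gcongr
    have : x - (x + t • (y - x)) = t • (x - y) := by
      rw [smul_sub, smul_sub]; abel
    rw [this, norm_smul, Real.norm_eq_abs, abs_of_nonneg ht.1]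
    exact mul_le_of_le_one_left (norm_nonneg _) ht.2
  refine LipschitzWith.of_dist_le_mul fun x y => ?_
  by_cases hx : ‖x‖ ≤ 1 <;> by_cases hy : ‖y‖ ≤ 1
  · simp only [hx, hy, if_true]
    exact hg.dist_le_mul x (by simpa using hx) y (by simpa using hy)
  · simp only [hx, hy, if_true, if_false, dist_zero_right]
    rw [dist_eq_norm]; exact key x y hx (not_le.mp hy)
  · simp only [hx, hy, if_true, if_false, dist_zero_left]
    rw [dist_comm, dist_eq_norm]; exact key y x hy (not_le.mp hx)
  · simp only [hx, hy, if_false, dist_self]; positivity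

theorem image_ball_of_small {E : Type*} [NormedAddCommGroup E] [NormedSpace ℝ E] [CompleteSpace E] (G : E → E) (K : NNReal)
    (hG : LipschitzWith K G) (h0 : ∀ x, 1 ≤ ‖x‖ → G x = 0) (t : ℝ) (ht : 0 < t) (htK : t * K < 1) :
    Function.Injective (fun x => x + t • G x) ∧ (fun x => x + t • G x) '' (ball 0 1) = ball 0 1 := by
  have hlip : ∀ x y, ‖t • G x - t • G y‖ ≤ (t * K) * ‖x - y‖ := by
    intro x y
    rw [← smul_sub, norm_smul, Real.norm_eq_abs, abs_of_pos ht, mul_assoc]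
    gcongr
    simpa [dist_eq_norm] using hG.dist_le_mul x y
  have inj : Function.Injective (fun x => x + t • G x) := by
    intro x y hxy
    simp only at hxy
    have h1 : x - y = t • G y - t • G x := by
      rw [sub_eq_sub_iff_add_eq_add, hxy, add_comm]
    have h2 := hlip y x
    rw [← h1, norm_sub_rev y x] at h2
    by_contra hne
    have : 0 < ‖x - y‖ := norm_pos_iff.mpr (sub_ne_zero.mpr hne)
    nlinarith
  have surj : Function.Surjective (fun x => x + t • G x) := by
    intro y
    have hc : ContractingWith (Real.toNNReal (t * K)) (fun x => y - t • G x) := by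
      refine ⟨by simpa using htK, LipschitzWith.of_dist_le_mul fun u v => ?_⟩
      rw [Real.coe_toNNReal _ (by positivity), dist_eq_norm, dist_eq_norm]
      have := hlip v u
      rw [norm_sub_rev v u] at this
      simpa using this
    refine ⟨hc.fixedPoint, ?_⟩
    have := hc.fixedPoint_isFixedPt
    have h3 : y - t • G (hc.fixedPoint) = hc.fixedPoint := this
    exact (sub_eq_iff_eq_add.mp h3).symm
  refine ⟨inj, ?_⟩
  have hout : ∀ x, 1 ≤ ‖x‖ → x + t • G x = x := by
    intro x hx; rw [h0 x hx]; simp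
  ext y
  constructor
  · rintro ⟨x, hx, rfl⟩
    by_contra hy
    simp only [mem_ball, dist_zero_right, not_lt] at hy hx
    have := inj (a₁ := x + t • G x) (a₂ := x) (hout _ hy)
    rw [this] at hy; linarith
  · intro hy
    obtain ⟨x, hx⟩ := surj y
    refine ⟨x, ?_, hx⟩
    by_contra hxn
    simp only [mem_ball, dist_zero_right, not_lt] at hxn hy
    have := hout x hxn
    simp only at hx
    rw [this] at hx; rw [hx] at hxn; linarith

theorem no_retract {n : ℕ} (h : EuclideanSpace ℝ (Fin n) → EuclideanSpace ℝ (Fin n))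
    (hh : ContDiff ℝ 1 h) (hne : ∀ x, h x ≠ 0) (hid : ∀ x, ‖x‖ = 1 → h x = x) : False := by
  let E := EuclideanSpace ℝ (Fin n)
  let p : E → E := fun x => (‖h x‖)⁻¹ • h x
  have hp : ContDiff ℝ 1 p :=
    ((hh.norm ℝ hne).inv (fun x => norm_ne_zero_iff.mpr (hne x))).smul hh
  have hp1 : ∀ x, ‖p x‖ = 1 := by
    intro x
    simp only [p, norm_smul, norm_inv, norm_norm]
    exact inv_mul_cancel₀ (norm_ne_zero_iff.mpr (hne x))
  let g : E → E := fun x => p x - x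
  have hg : ContDiff ℝ 1 g := hp.sub contDiff_id
  have hg0 : ∀ x, ‖x‖ = 1 → g x = 0 := by
    intro x hx
    simp [g, p, hid x hx, hx]
  have hgd : Differentiable ℝ g := hg.differentiable (by norm_num)
  have hgc : Continuous (fderiv ℝ g) := hg.continuous_fderiv (by norm_num)
  obtain ⟨C, hC⟩ := (isCompact_closedBall (0 : E) 1).exists_bound_of_continuousOn hgc.continuousOn
  let K : NNReal := Real.toNNReal (max C 1)
  have hK1 : (1:ℝ) ≤ K := by simp [K]
  have hCK : ∀ x ∈ closedBall (0 : E) 1, ‖fderiv ℝ g x‖ ≤ K := by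
    intro x hx
    refine (hC x hx).trans ?_
    simp [K]
  have hlip : LipschitzOnWith K g (closedBall 0 1) :=
    (convex_closedBall (0:E) 1).lipschitzOnWith_of_nnnorm_fderiv_le (𝕜 := ℝ)
      (fun x _ => hgd x) (fun x hx => by exact_mod_cast hCK x hx)
  have hGl := glue_lipschitz g K hlip hg0
  let G : E → E := fun x => if ‖x‖ ≤ 1 then g x else 0
  have hGout : ∀ x, 1 ≤ ‖x‖ → G x = 0 := by
    intro x hx
    by_cases h1 : ‖x‖ ≤ 1
    · simp [G, h1, hg0 x (le_antisymm h1 hx)]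
    · simp [G, h1]
  -- positivity of det near the identity
  have hdetc : Continuous (fun A : E →L[ℝ] E => A.det) := ContinuousLinearMap.continuous_det
  have hpos : ∀ᶠ A : E →L[ℝ] E in 𝓝 1, 0 < A.det := by
    apply hdetc.continuousAt.eventually (lt_mem_nhds _)
    have : (1 : E →L[ℝ] E).det = 1 := by
      rw [ContinuousLinearMap.det]; exact LinearMap.det_id
    show 0 < (1 : E →L[ℝ] E).det
    rw [this]; exact one_pos
  obtain ⟨η, hη, hball⟩ := Metric.eventually_nhds_iff.mp hpos
  let δ : ℝ := min 1 η / (2 * K)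
  have hδ : 0 < δ := by positivity
  obtain ⟨s, hsub, hcard⟩ := (Ioo_infinite hδ).exists_subset_card_eq (n + 1)
  obtain ⟨w, hw1, hw⟩ := lag_det (n := n) s (by omega)
  have hts : ∀ t ∈ s, 0 < t ∧ t * K < 1 ∧ t * K < η := by
    intro t ht
    have h1 := hsub ht
    have h2 : t * K < min 1 η / 2 := by
      have : t < δ := h1.2
      have h3 : t * K < δ * K := by
        apply mul_lt_mul_of_pos_right this; linarith
      have h4 : δ * K = min 1 η / 2 := by
        simp only [δ]; field_simp
      linarith
    have hm : 0 < min 1 η := by positivity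
    have := min_le_left 1 η
    have := min_le_right 1 η
    exact ⟨h1.1, by linarith, by linarith⟩
  have hdet_pos : ∀ t ∈ s, ∀ x ∈ ball (0:E) 1, 0 < (1 + t • fderiv ℝ g x).det := by
    intro t ht x hx
    apply hball
    obtain ⟨a, b, c⟩ := hts t ht
    rw [dist_eq_norm, add_sub_cancel_left, norm_smul, Real.norm_eq_abs, abs_of_pos a]
    have := hCK x (ball_subset_closedBall hx)
    nlinarith
  have hInter : ∀ t ∈ s, ∫ x in ball (0:E) 1, (1 + t • fderiv ℝ g x).det = (volume (ball (0:E) 1)).toReal := by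
    intro t ht
    obtain ⟨a, b, c⟩ := hts t ht
    obtain ⟨inj, him⟩ := image_ball_of_small G K hGl hGout t a b
    have hder : ∀ x ∈ ball (0:E) 1, HasFDerivWithinAt (fun x => x + t • G x) (1 + t • fderiv ℝ g x) (ball 0 1) x := by
      intro x hx
      have h1 : HasFDerivAt (fun x => x + t • g x) (1 + t • fderiv ℝ g x) x :=
        (hasFDerivAt_id x).add ((hgd x).hasFDerivAt.const_smul t)
      refine h1.hasFDerivWithinAt.congr (fun y hy => ?_) ?_
      · have : ‖y‖ ≤ 1 := by simpa using (ball_subset_closedBall hy)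
        simp [G, this]
      · have : ‖x‖ ≤ 1 := by simpa using (ball_subset_closedBall hx)
        simp [G, this]
    have h2 := lintegral_abs_det_fderiv_eq_addHaar_image volume measurableSet_ball hder inj.injOn
    rw [him] at h2
    rw [← h2, ← integral_toReal]
    · refine setIntegral_congr_fun measurableSet_ball fun x hx => ?_
      simp only [ENNReal.toReal_ofReal (abs_nonneg _)]
      rw [abs_of_pos (hdet_pos t ht x hx)]
    · refine Continuous.aemeasurable ?_
      have : Continuous (fun x => (1 + t • fderiv ℝ g x).det) := by
        exact hdetc.comp (by fun_prop)
      exact ENNReal.continuous_ofReal.comp this.abs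
    · exact Filter.Eventually.of_forall fun x => ENNReal.ofReal_lt_top
  -- det vanish at t = 1
  have hzero : ∀ x, (1 + fderiv ℝ g x).det = 0 := by
    intro x
    have h1 : (1 + fderiv ℝ g x) = fderiv ℝ p x := by
      have : HasFDerivAt (fun x => x + g x) (1 + fderiv ℝ g x) x :=
        (hasFDerivAt_id x).add ((hgd x).hasFDerivAt)
      have h3 : (fun x => x + g x) = p := by ext1 y; simp [g]
      rw [h3] at this
      exact this.fderiv.symm
    rw [h1]
    by_contra hd
    have hpd := (hp.differentiable (by norm_num) x).hasFDerivAt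
    have hsurj : Function.Surjective (fderiv ℝ p x) := by
      have hu : IsUnit (fderiv ℝ p x : E →ₗ[ℝ] E).det := isUnit_iff_ne_zero.mpr hd
      exact ((LinearMap.isUnit_iff_isUnit_det _).mpr hu |> (Module.End.isUnit_iff _).mp).2
    obtain ⟨v, hv⟩ := hsurj (p x)
    have h4 : HasFDerivAt (fun x => inner ℝ (p x) (p x)) _ x := hpd.inner ℝ hpd
    have h5 : (fun x => inner ℝ (p x) (p x)) = fun _ => (1:ℝ) := by
      ext y; rw [real_inner_self_eq_norm_sq, hp1]; norm_num
    rw [h5] at h4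
    have h6 := h4.unique (hasFDerivAt_const (1:ℝ) x)
    have h7 := congrArg (fun L => L v) h6
    simp [hv, hp1] at h7
  have hfin : (∫ x in ball (0:E) 1, (1 + fderiv ℝ g x).det) = (volume (ball (0:E) 1)).toReal := by
    have hfe : (fun x => (1 + fderiv ℝ g x).det) = fun x => ∑ t ∈ s, w t * (1 + t • fderiv ℝ g x).det :=
      funext fun x => hw _
    rw [hfe]
    rw [integral_finsetSum]
    · have : ∀ V : ℝ, V = ∑ t ∈ s, w t * V := by
        intro V; rw [← Finset.sum_mul, hw1, one_mul]
      rw [this (volume (ball (0:E) 1)).toReal]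
      refine Finset.sum_congr rfl fun t ht => ?_
      rw [integral_const_mul, hInter t ht]
    · intro t ht
      have : Continuous (fun x => w t * (1 + t • fderiv ℝ g x).det) := by
        exact continuous_const.mul (hdetc.comp (by fun_prop))
      exact (this.continuousOn.integrableOn_compact (isCompact_closedBall (0:E) 1)).mono_set ball_subset_closedBall
  simp_rw [hzero] at hfin
  rw [integral_zero] at hfin
  have : 0 < (volume (ball (0:E) 1)).toReal :=
    ENNReal.toReal_pos (measure_ball_pos volume 0 one_pos).ne' measure_ball_lt_top.ne
  linarith

theorem exists_zero_near_id {n : ℕ} (h0 : EuclideanSpace ℝ (Fin n) → EuclideanSpace ℝ (Fin n))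
    (hc : ContinuousOn h0 (closedBall 0 1)) (hid : ∀ x ∈ closedBall 0 1, ‖h0 x - x‖ ≤ 1 / 4) :
    ∃ x ∈ closedBall (0 : EuclideanSpace ℝ (Fin n)) 1, h0 x = 0 := by
  by_contra hcon
  push Not at hcon
  let E := EuclideanSpace ℝ (Fin n)
  -- extend to a continuous function
  obtain ⟨H, hH⟩ := ContinuousMap.exists_restrict_eq (isClosed_closedBall (x := (0:E)) (ε := 1))
    (⟨_, hc.domRestrict⟩ : C(closedBall (0:E) 1, E))
  have hHe : ∀ x ∈ closedBall (0:E) 1, H x = h0 x := by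
    intro x hx
    exact congrArg (fun f => f ⟨x, hx⟩) hH
  obtain ⟨δ, hδ, hδ'⟩ : ∃ δ > 0, ∀ x ∈ closedBall (0:E) 1, δ ≤ ‖H x‖ := by
    obtain ⟨x0, hx0, hmin⟩ := (isCompact_closedBall (0:E) 1).exists_isMinOn ⟨0, by simp⟩
      (H.continuous.norm.continuousOn)
    refine ⟨‖H x0‖, norm_pos_iff.mpr (by rw [hHe x0 hx0]; exact hcon x0 hx0), fun x hx => hmin hx⟩
  obtain ⟨q, hq, hqa, -⟩ := H.continuous.exists_contDiff_approx 1 (ε := fun _ => min (δ / 2) (1 / 8))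
    continuous_const (fun _ => by positivity)
  let χ : ContDiffBump (0 : E) := ⟨1/2, 3/4, by norm_num, by norm_num⟩
  have hχ : ContDiff ℝ 1 χ := χ.contDiff
  refine no_retract (fun x => x + χ x • (q x - x)) ?_ ?_ ?_
  · exact contDiff_id.add (hχ.smul (hq.sub contDiff_id))
  · intro x hx0
    by_cases h1 : ‖x‖ ≤ 1 / 2
    · have hχ1 : χ x = 1 := χ.one_of_mem_closedBall (by simpa [χ] using h1)
      rw [hχ1] at hx0
      have hqx : q x = 0 := by simpa using hx0
      have hxb : x ∈ closedBall (0:E) 1 := by simp; linarith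
      have := hqa x
      rw [hqx, dist_zero_left] at this
      have h3 := hδ' x hxb
      have := min_le_left (δ/2) (1/8:ℝ)
      linarith
    · push Not at h1
      by_cases h2 : ‖x‖ ≤ 1
      · have hxb : x ∈ closedBall (0:E) 1 := by simpa using h2
        have h3 : ‖q x - x‖ ≤ 3/8 := by
          have a := hqa x
          have b := hid x hxb
          rw [hHe x hxb, dist_eq_norm] at a
          have c := norm_add_le (q x - h0 x) (h0 x - x)
          rw [sub_add_sub_cancel] at c
          have := min_le_right (δ/2) (1/8:ℝ)
          linarith
        have h4 : ‖χ x • (q x - x)‖ ≤ 3/8 := by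
          rw [norm_smul, Real.norm_eq_abs, abs_of_nonneg χ.nonneg]
          have := χ.le_one (x := x)
          have := χ.nonneg (x := x)
          nlinarith [norm_nonneg (q x - x)]
        have h5 : x = - (χ x • (q x - x)) := eq_neg_of_add_eq_zero_left hx0
        rw [← norm_neg, ← h5] at h4
        linarith
      · push Not at h2
        have : χ x = 0 := χ.zero_of_le_dist (by simp [χ]; linarith)
        simp only [this, zero_smul, add_zero] at hx0
        rw [hx0] at h2; simp at h2; linarith
  · intro x hx
    have : χ x = 0 := χ.zero_of_le_dist (by simp [χ]; linarith)
    simp [this]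

theorem inv_domain_aux {n : ℕ} (f : EuclideanSpace ℝ (Fin n) → EuclideanSpace ℝ (Fin n))
    (hc : ContinuousOn f (closedBall 0 1)) (hi : InjOn f (closedBall 0 1)) :
    f 0 ∈ interior (f '' closedBall 0 1) := by
  by_contra hcon
  let E := EuclideanSpace ℝ (Fin n)
  let K : Set E := f '' closedBall 0 1
  have h0B : (0:E) ∈ closedBall (0:E) 1 := by simp
  -- inverse extends
  obtain ⟨G, hG⟩ : ∃ G : C(E, E), ∀ x ∈ closedBall (0:E) 1, G (f x) = x := by
    have : CompactSpace (closedBall (0:E) 1) := isCompact_iff_compactSpace.mp (isCompact_closedBall _ _)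
    have he : IsClosedEmbedding ((closedBall (0:E) 1).domRestrict f) :=
      hc.domRestrict.isClosedEmbedding (injOn_iff_injective.mp hi)
    obtain ⟨G, hG⟩ := ContinuousMap.exists_extension' he (⟨Subtype.val, continuous_subtype_val⟩ : C(closedBall (0:E) 1, E))
    exact ⟨G, fun x hx => congrFun hG ⟨x, hx⟩⟩
  have hKc : IsCompact K := (isCompact_closedBall _ _).image_of_continuousOn hc
  have hG0 : G (f 0) = 0 := hG 0 h0B
  obtain ⟨ε, hε, hGε⟩ : ∃ ε > 0, ∀ y, dist y (f 0) < 3 * ε → ‖G y‖ < 1 / 20 := by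
    obtain ⟨e, he, h⟩ := Metric.continuousAt_iff.mp (G.continuous.continuousAt (x := f 0)) (1/20) (by norm_num)
    refine ⟨e / 3, by positivity, fun y hy => ?_⟩
    have := h (x := y) (by linarith)
    rwa [hG0, dist_zero_right] at this
  obtain ⟨c, hcK, hcε⟩ : ∃ c, c ∉ K ∧ dist c (f 0) < ε := by
    by_contra hno
    push Not at hno
    apply hcon
    rw [mem_interior_iff_mem_nhds, Metric.mem_nhds_iff]
    refine ⟨ε, hε, fun y hy => ?_⟩
    by_contra hy'
    have := hno y hy'
    rw [mem_ball] at hy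
    linarith
  have hGK : ∀ y ∈ K, G y = 0 → y = f 0 := by
    rintro _ ⟨x, hx, rfl⟩ hy
    rw [hG x hx] at hy; rw [hy]
  obtain ⟨δ, hδ, hδ1, hδ'⟩ : ∃ δ > 0, δ ≤ 1 / 20 ∧ ∀ y ∈ K, ε ≤ dist y c → δ ≤ ‖G y‖ := by
    let S : Set E := K ∩ {y | ε ≤ dist y c}
    have hS : IsCompact S := hKc.inter_right (isClosed_le continuous_const (by fun_prop))
    rcases S.eq_empty_or_nonempty with hem | hnon
    · refine ⟨1/20, by norm_num, le_rfl, fun y hy hyc => ?_⟩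
      have : y ∈ S := ⟨hy, hyc⟩
      rw [hem] at this; exact this.elim
    · obtain ⟨y0, hy0, hmin⟩ := hS.exists_isMinOn hnon G.continuous.norm.continuousOn
      refine ⟨min (1/20) ‖G y0‖, ?_, min_le_left _ _, fun y hy hyc => (min_le_right _ _).trans (hmin ⟨hy, hyc⟩)⟩
      have : G y0 ≠ 0 := by
        intro h
        have h1 := hGK y0 hy0.1 h
        have h2 : ε ≤ dist y0 c := hy0.2
        rw [h1, dist_comm] at h2; linarith
      have := norm_pos_iff.mpr this
      positivity
  obtain ⟨P, hP, hPa, -⟩ := G.continuous.exists_contDiff_approx 1 (ε := fun _ => δ / 3)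
    continuous_const (fun _ => by positivity)
  obtain ⟨v, hv, hvP⟩ : ∃ v : E, ‖v‖ < δ / 3 ∧ ∀ y ∈ sphere c ε, P y ≠ v := by
    have hnull : volume (P '' sphere c ε) = 0 :=
      addHaar_image_eq_zero_of_differentiableOn_of_addHaar_eq_zero volume
        (hP.differentiable (by norm_num)).differentiableOn
        (Measure.addHaar_sphere_of_ne_zero volume c hε.ne')
    by_contra hno
    push Not at hno
    have hsub : ball (0:E) (δ/3) ⊆ P '' sphere c ε := by
      intro v hv
      obtain ⟨y, hy, hyv⟩ := hno v (by simpa using hv)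
      exact ⟨y, hy, hyv⟩
    have h1 := measure_mono (μ := volume) hsub
    rw [hnull] at h1
    have h2 := measure_ball_pos volume (0:E) (r := δ/3) (by positivity)
    exact absurd h1 (not_le.mpr h2)
  let Φ : E → E := fun y => c + (max 1 (ε / ‖y - c‖)) • (y - c)
  have hyc : ∀ y ∈ K, ‖y - c‖ ≠ 0 := by
    intro y hy h
    rw [norm_eq_zero, sub_eq_zero] at h
    exact hcK (h ▸ hy)
  have hΦc : ContinuousOn Φ K := by
    have a : ContinuousOn (fun y : E => y - c) K := by fun_prop
    have b : ContinuousOn (fun y : E => ε / ‖y - c‖) K := continuousOn_const.div a.norm hyc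
    have b' : ContinuousOn (fun y : E => max 1 (ε / ‖y - c‖)) K :=
      continuous_max.comp_continuousOn (continuousOn_const.prodMk b)
    have e : ContinuousOn (fun y : E => max 1 (ε / ‖y - c‖) • (y - c)) K := b'.smul a
    exact continuousOn_const.add e
  have hΦfar : ∀ y ∈ K, ε ≤ dist y c → Φ y = y := by
    intro y hy h
    rw [dist_eq_norm] at h
    have h1 : ε / ‖y - c‖ ≤ 1 := (div_le_one (by linarith)).mpr h
    simp [Φ, max_eq_left h1]
  have hΦnear : ∀ y ∈ K, dist y c < ε → Φ y ∈ sphere c ε := by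
    intro y hy h
    rw [dist_eq_norm] at h
    have hp : 0 < ‖y - c‖ := lt_of_le_of_ne (norm_nonneg _) (hyc y hy).symm
    have h1 : 1 ≤ ε / ‖y - c‖ := (one_le_div hp).mpr h.le
    simp only [Φ, max_eq_right h1]
    rw [mem_sphere, dist_eq_norm, add_sub_cancel_left, norm_smul, norm_div, norm_norm,
      Real.norm_eq_abs, abs_of_pos hε]
    field_simp
  have hPG : ∀ y, ‖(P y - v) - G y‖ ≤ 2 * δ / 3 := by
    intro y
    have h1 := hPa y
    rw [dist_eq_norm] at h1
    have : (P y - v) - G y = (P y - G y) - v := by abel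
    rw [this]
    have := norm_sub_le (P y - G y) v
    linarith
  obtain ⟨x, hx, hx0⟩ := exists_zero_near_id (fun x => P (Φ (f x)) - v) (by
      refine ContinuousOn.sub (hP.continuous.comp_continuousOn (hΦc.comp hc ?_)) continuousOn_const
      exact mapsTo_image _ _) (by
      intro x hx
      have hxK : f x ∈ K := mem_image_of_mem _ hx
      by_cases hfar : ε ≤ dist (f x) c
      · rw [hΦfar _ hxK hfar]
        have := hPG (f x)
        rw [hG x hx] at this
        linarith
      · push Not at hfar
        have hs := hΦnear _ hxK hfar
        rw [mem_sphere] at hs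
        have h1 := hPG (Φ (f x))
        have h2 := hGε (Φ (f x)) (by have := dist_triangle (Φ (f x)) c (f 0); linarith)
        have h3 := hGε (f x) (by have := dist_triangle (f x) c (f 0); linarith)
        rw [hG x hx] at h3
        have : P (Φ (f x)) - v - x = ((P (Φ (f x)) - v - G (Φ (f x))) + G (Φ (f x))) - x := by abel
        rw [this]
        have h4 := norm_sub_le ((P (Φ (f x)) - v - G (Φ (f x))) + G (Φ (f x))) x
        have h5 := norm_add_le (P (Φ (f x)) - v - G (Φ (f x))) (G (Φ (f x)))
        linarith)
  have hxK : f x ∈ K := mem_image_of_mem _ hx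
  by_cases hfar : ε ≤ dist (f x) c
  · rw [hΦfar _ hxK hfar] at hx0
    have h1 := hPG (f x)
    rw [hx0, zero_sub, norm_neg] at h1
    have := hδ' _ hxK hfar
    linarith
  · push Not at hfar
    exact hvP _ (hΦnear _ hxK hfar) (sub_eq_zero.mp hx0)

theorem tile_regular {n : ℕ} (m : Set (EuclideanSpace ℝ (Fin n)))
    (hm : Nonempty (m ≃ₜ (Metric.closedBall (0 : EuclideanSpace ℝ (Fin n)) 1))) :
    m ⊆ closure (interior m) := by
  obtain ⟨φ⟩ := hm
  let E := EuclideanSpace ℝ (Fin n)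
  -- interior points map to interior points
  have key : ∀ z : closedBall (0:E) 1, ‖(z:E)‖ < 1 → (φ.symm z : E) ∈ interior m := by
    intro z hz
    let ρ : ℝ := 1 - ‖(z:E)‖
    have hρ : 0 < ρ := by simp only [ρ]; linarith
    have hmem : ∀ w ∈ closedBall (0:E) 1, (z:E) + ρ • w ∈ closedBall (0:E) 1 := by
      intro w hw
      simp only [mem_closedBall, dist_zero_right] at hw ⊢
      have := norm_add_le (z:E) (ρ • w)
      rw [norm_smul, Real.norm_eq_abs, abs_of_pos hρ] at this
      have h2 : ρ * ‖w‖ ≤ ρ * 1 := by gcongr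
      simp only [ρ] at *
      linarith
    classical
    let f : E → E := fun w => if h : (z:E) + ρ • w ∈ closedBall (0:E) 1 then (φ.symm ⟨_, h⟩ : E) else 0
    have hf : ∀ w (hw : w ∈ closedBall (0:E) 1), f w = φ.symm ⟨_, hmem w hw⟩ := by
      intro w hw
      simp only [f, dif_pos (hmem w hw)]
    have h1 := inv_domain_aux f (by
        rw [continuousOn_iff_continuous_domRestrict]
        have : (closedBall (0:E) 1).domRestrict f = fun w : closedBall (0:E) 1 => (φ.symm ⟨_, hmem w.1 w.2⟩ : E) := by
          ext1 w; exact hf w.1 w.2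
        rw [this]
        refine continuous_subtype_val.comp (φ.symm.continuous.comp (Continuous.subtype_mk (by fun_prop) _)))
      (by
        intro w hw w' hw' he
        rw [hf w hw, hf w' hw'] at he
        have := φ.symm.injective (Subtype.ext he)
        have := congrArg Subtype.val this
        simp only [add_right_inj] at this
        exact smul_right_injective E hρ.ne' this)
    have h2 : f 0 = φ.symm z := by
      rw [hf 0 (by simp)]
      congr 2
      ext1; simp
    rw [← h2]
    refine interior_mono ?_ h1
    rintro _ ⟨w, hw, rfl⟩
    rw [hf w hw]
    exact (φ.symm _).2
  intro y hy
  let x := φ ⟨y, hy⟩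
  let z : ℕ → closedBall (0:E) 1 := fun k => ⟨(1 - 1 / ((k:ℝ) + 1)) • (x:E), by
    have hx := x.2
    simp only [mem_closedBall, dist_zero_right] at hx ⊢
    have h1 : 0 ≤ 1 - 1 / ((k:ℝ) + 1) := by
      rw [sub_nonneg, div_le_one (by positivity)]; linarith [Nat.cast_nonneg (α := ℝ) k]
    have h2 : 0 < 1 / ((k:ℝ) + 1) := by positivity
    rw [norm_smul, Real.norm_eq_abs, abs_of_nonneg h1]
    nlinarith [norm_nonneg (x:E)]⟩
  have hz : ∀ k, ‖(z k : E)‖ < 1 := by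
    intro k
    have hx := x.2
    simp only [mem_closedBall, dist_zero_right] at hx 
    have h1 : 0 ≤ 1 - 1 / ((k:ℝ) + 1) := by
      rw [sub_nonneg, div_le_one (by positivity)]; linarith [Nat.cast_nonneg (α := ℝ) k]
    have h2 : 0 < 1 / ((k:ℝ) + 1) := by positivity
    simp only [z, norm_smul, Real.norm_eq_abs, abs_of_nonneg h1]
    nlinarith [norm_nonneg (x:E)]
  have hlim : Tendsto z atTop (𝓝 x) := by
    rw [tendsto_subtype_rng]
    have h1 : Tendsto (fun k : ℕ => (1 - 1 / ((k:ℝ) + 1)) • (x:E)) atTop (𝓝 ((1 - 0 : ℝ) • (x:E))) :=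
      (tendsto_const_nhds.sub tendsto_one_div_add_atTop_nhds_zero_nat).smul tendsto_const_nhds
    rw [sub_zero, one_smul] at h1
    exact h1
  have hlim2 : Tendsto (fun k => (φ.symm (z k) : E)) atTop (𝓝 y) := by
    have h1 := ((continuous_subtype_val.comp φ.symm.continuous).tendsto x).comp hlim
    have h2 : (Subtype.val ∘ φ.symm) x = y := by simp [x]
    rw [h2] at h1
    exact h1
  exact mem_closure_of_tendsto hlim2 (Eventually.of_forall fun k => key _ (hz k))

theorem boxSet_eq (a b : Fin d → ℝ) :
    boxSet d a b = (EuclideanSpace.equiv (Fin d) ℝ).toHomeomorph ⁻¹' (Set.pi univ fun j => Icc (a j) (b j)) := by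
  ext x
  exact ⟨fun h j _ => h j, fun h j => h j trivial⟩

theorem interior_boxSet (a b : Fin d → ℝ) :
    interior (boxSet d a b) = {x | ∀ j, x j ∈ Ioo (a j) (b j)} := by
  rw [boxSet_eq, ← Homeomorph.preimage_interior, interior_pi_set Set.finite_univ]
  ext x; simp [Set.mem_pi]

theorem isClosed_boxSet (a b : Fin d → ℝ) : IsClosed (boxSet d a b) := by
  rw [boxSet_eq]
  exact (isClosed_set_pi fun j _ => isClosed_Icc).preimage (Homeomorph.continuous _)

theorem boxSet_subset_closure (a b : Fin d → ℝ) (h : ∀ j, a j < b j) :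
    boxSet d a b ⊆ closure (interior (boxSet d a b)) := by
  rw [boxSet_eq, ← Homeomorph.preimage_interior, interior_pi_set Set.finite_univ,
    ← Homeomorph.preimage_closure, closure_pi_set]
  refine preimage_mono (Set.pi_mono fun j _ => ?_)
  rw [interior_Icc, closure_Ioo (h j).ne]

theorem volOf_boxSet (a b : Fin d → ℝ) (h : ∀ j, a j ≤ b j) :
    volOf d (boxSet d a b) = ∏ j, (b j - a j) := by
  have h1 : boxSet d a b = (MeasurableEquiv.toLp 2 (Fin d → ℝ)).symm ⁻¹' (Set.pi univ fun j => Icc (a j) (b j)) := by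
    ext x
    exact ⟨fun h j _ => h j, fun h j => h j trivial⟩
  rw [volOf, h1, (EuclideanSpace.volume_preserving_symm_measurableEquiv_toLp (Fin d)).measure_preimage_equiv]
  rw [Set.pi_univ_Icc, Real.volume_Icc_pi_toReal h]

theorem image_boxSet (a b : Fin d → ℝ) (h : ∀ j, a j ≤ b j) (j : Fin d) :
    (fun x : Pt d => x j) '' boxSet d a b = Icc (a j) (b j) := by
  ext y
  constructor
  · rintro ⟨x, hx, rfl⟩; exact hx j
  · intro hy
    refine ⟨WithLp.toLp 2 (Function.update a j y), fun i => ?_, by simp⟩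
    by_cases hij : i = j
    · subst hij; simpa using hy
    · simp [hij, h i]

theorem widthOf_boxSet (a b : Fin d → ℝ) (h : ∀ j, a j ≤ b j) :
    widthOf d (boxSet d a b) = ⨅ j, (b j - a j) := by
  unfold widthOf
  congr 1; ext j
  rw [image_boxSet d a b h j, csSup_Icc (h j), csInf_Icc (h j)]

theorem le_widthOf_boxSet (hd : 0 < d) (a b : Fin d → ℝ) (r : ℝ) (hr : 0 ≤ r) (h : ∀ j, r ≤ b j - a j) :
    r ≤ widthOf d (boxSet d a b) := by
  rw [widthOf_boxSet d a b (fun j => by linarith [h j])]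
  have : Nonempty (Fin d) := ⟨⟨0, hd⟩⟩
  exact le_ciInf h

theorem boxSet_injective (a b a' b' : Fin d → ℝ) (h : ∀ j, a j < b j) (h' : ∀ j, a' j < b' j)
    (he : boxSet d a b = boxSet d a' b') : a = a' ∧ b = b' := by
  have key : ∀ j, Icc (a j) (b j) = Icc (a' j) (b' j) := by
    intro j
    rw [← image_boxSet d a b (fun j => (h j).le) j, he, image_boxSet d a' b' (fun j => (h' j).le) j]
  constructor
  · ext j
    have := congrArg sInf (key j)
    rwa [csInf_Icc (h j).le, csInf_Icc (h' j).le] at this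
  · ext j
    have := congrArg sSup (key j)
    rwa [csSup_Icc (h j).le, csSup_Icc (h' j).le] at this

theorem corner_mem (a b : Fin d → ℝ) (h : ∀ j, a j ≤ b j) :
    (WithLp.toLp 2 a : Pt d) ∈ boxSet d a b ∧ (WithLp.toLp 2 b : Pt d) ∈ boxSet d a b :=
  ⟨fun j => by simp [h j], fun j => by simp [h j]⟩

theorem center_mem_interior (a b : Fin d → ℝ) (h : ∀ j, a j < b j) :
    (WithLp.toLp 2 (fun j => (a j + b j) / 2) : Pt d) ∈ interior (boxSet d a b) := by
  rw [interior_boxSet]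
  intro j
  have := h j
  constructor <;> simp <;> linarith

theorem dist_le_of_coord (hd : 0 < d) (x y : Pt d) (t : ℝ) (ht : 0 ≤ t) (h : ∀ j, |x j - y j| ≤ t) :
    dist x y ≤ d * t := by
  rw [EuclideanSpace.dist_eq]
  apply Real.sqrt_le_iff.mpr
  refine ⟨by positivity, ?_⟩
  have h1 : ∑ i, dist (x i) (y i) ^ 2 ≤ ∑ i : Fin d, t ^ 2 := by
    refine Finset.sum_le_sum fun i _ => ?_
    rw [Real.dist_eq]
    have := h i
    gcongr
  refine h1.trans ?_
  simp
  have : (1:ℝ) ≤ d := by exact_mod_cast hd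
  nlinarith [sq_nonneg t, mul_nonneg (mul_nonneg (sq_nonneg t) (by linarith : (0:ℝ) ≤ d)) (by linarith : (0:ℝ) ≤ d - 1)]

theorem coord_le_dist (x y : Pt d) (j : Fin d) : |x j - y j| ≤ dist x y := by
  rw [dist_eq_norm]
  have := PiLp.norm_apply_le (x - y) j
  simpa using this

/-! ### Patterns -/

theorem tile_isCompact (m : Set (Pt d)) (hm : IsTile d m) : IsCompact m := by
  obtain ⟨φ⟩ := hm
  have : CompactSpace (closedBall (0 : Pt d) 1) := isCompact_iff_compactSpace.mp (isCompact_closedBall _ _)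
  exact isCompact_iff_compactSpace.mpr φ.symm.compactSpace

theorem tile_nonempty (m : Set (Pt d)) (hm : IsTile d m) : m.Nonempty := by
  obtain ⟨φ⟩ := hm
  exact ⟨_, (φ.symm ⟨0, by simp⟩).2⟩

theorem supp_isCompact (M : Set (Set (Pt d))) (hM : IsPattern d M) : IsCompact (supp d M) := by
  unfold supp
  exact hM.1.isCompact_sUnion fun m hm => tile_isCompact d m (hM.2.2.1 m hm)

theorem supp_nonempty (M : Set (Set (Pt d))) (hM : IsPattern d M) : (supp d M).Nonempty := by
  obtain ⟨m, hm⟩ := hM.2.1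
  obtain ⟨x, hx⟩ := tile_nonempty d m (hM.2.2.1 m hm)
  exact ⟨x, m, hm, hx⟩

theorem isPattern_subset (M N : Set (Set (Pt d))) (hM : IsPattern d M) (h : N ⊆ M) (hN : N.Nonempty) :
    IsPattern d N :=
  ⟨hM.1.subset h, hN, fun m hm => hM.2.2.1 m (h hm), hM.2.2.2.mono h⟩

theorem supp_patRestrict (M : Set (Set (Pt d))) (hM : IsPattern d M) (a b : Fin d → ℝ) (h : ∀ j, a j < b j)
    (hsub : boxSet d a b ⊆ supp d M) : supp d (patRestrict d M (boxSet d a b)) = boxSet d a b := by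
  apply Subset.antisymm
  · rintro x ⟨s, ⟨m, hm, -, rfl⟩, hx⟩; exact hx.2
  · have hfin : (patRestrict d M (boxSet d a b)).Finite := by
      refine (hM.1.image (fun m => m ∩ boxSet d a b)).subset ?_
      rintro s ⟨m, hm, -, rfl⟩; exact ⟨m, hm, rfl⟩
    have hcl : IsClosed (supp d (patRestrict d M (boxSet d a b))) := by
      refine IsCompact.isClosed (hfin.isCompact_sUnion ?_)
      rintro s ⟨m, hm, -, rfl⟩
      exact (tile_isCompact d m (hM.2.2.1 m hm)).inter_right (isClosed_boxSet d a b)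
    refine (boxSet_subset_closure d a b h).trans (closure_minimal ?_ hcl)
    intro x hx
    obtain ⟨m, hm, hxm⟩ := hsub (interior_subset hx)
    exact ⟨m ∩ boxSet d a b, ⟨m, hm, ⟨x, hxm, hx⟩, rfl⟩, hxm, interior_subset hx⟩

theorem patRestrict_patRestrict (M : Set (Set (Pt d))) (B B' : Set (Pt d)) (h : B' ⊆ B) :
    patRestrict d (patRestrict d M B) B' = patRestrict d M B' := by
  ext s
  constructor
  · rintro ⟨_, ⟨m, hm, h1, rfl⟩, ⟨x, hx, hx'⟩, rfl⟩
    refine ⟨m, hm, ⟨x, hx.1, hx'⟩, ?_⟩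
    rw [inter_assoc, inter_eq_self_of_subset_right h]
  · rintro ⟨m, hm, ⟨x, hx, hx'⟩, rfl⟩
    refine ⟨m ∩ B, ⟨m, hm, ⟨x, hx, interior_mono h hx'⟩, rfl⟩, ⟨x, ⟨hx, h (interior_subset hx')⟩, hx'⟩, ?_⟩
    rw [inter_assoc, inter_eq_self_of_subset_right h]

theorem patRestrict_mem (Ps : Set (Set (Set (Pt d)))) (P : Set (Set (Pt d))) (hP : P ∈ Ps) (a b : Fin d → ℝ) (h : ∀ j, a j < b j)
    (hsub : boxSet d a b ⊆ supp d P) : patRestrict d P (boxSet d a b) ∈ BoxPatterns d Ps :=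
  ⟨P, hP, _, ⟨a, b, h, rfl⟩, hsub, rfl⟩

/-- tiles of the pattern meeting the interior of the box -/
theorem patRestrict_translate (P Q : Set (Set (Pt d))) (hQ : IsPattern d Q) (t : Pt d)
    (hPQ : patTrans d t P ⊆ Q) (a b : Fin d → ℝ) (hsub : boxSet d a b ⊆ supp d P) :
    patRestrict d Q (boxSet d (fun j => a j + t j) (fun j => b j + t j)) =
      patTrans d t (patRestrict d P (boxSet d a b)) := by
  have hbox : ∀ x : Pt d, x + t ∈ boxSet d (fun j => a j + t j) (fun j => b j + t j) ↔ x ∈ boxSet d a b := by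
    intro x; simp [boxSet]
  have hInter : ∀ x : Pt d, x + t ∈ interior (boxSet d (fun j => a j + t j) (fun j => b j + t j)) ↔ x ∈ interior (boxSet d a b) := by
    intro x; simp [interior_boxSet]
  have himg : ∀ m : Set (Pt d), (fun x => x + t) '' m ∩ boxSet d (fun j => a j + t j) (fun j => b j + t j)
      = (fun x => x + t) '' (m ∩ boxSet d a b) := by
    intro m
    ext y
    constructor
    · rintro ⟨⟨x, hx, rfl⟩, hy⟩
      exact ⟨x, ⟨hx, (hbox x).mp hy⟩, rfl⟩
    · rintro ⟨x, ⟨hx, hx'⟩, rfl⟩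
      exact ⟨⟨x, hx, rfl⟩, (hbox x).mpr hx'⟩
  ext s
  constructor
  · rintro ⟨q, hq, ⟨y, hy, hy'⟩, rfl⟩
    have hqP : q ∈ patTrans d t P := by
      by_contra hqn
      have hreg := tile_regular q (hQ.2.2.1 q hq)
      obtain ⟨y1, hy1, hy1q⟩ := mem_closure_iff.mp (hreg hy) _ isOpen_interior hy'
      -- y1 is covered by a tile of P + t
      have h1 : y1 - t ∈ boxSet d a b := by
        rw [← hbox, sub_add_cancel]; exact interior_subset hy1
      obtain ⟨p, hp, hpy⟩ := hsub h1
      have hpt : (fun x => x + t) '' p ∈ patTrans d t P := ⟨p, hp, rfl⟩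
      have hpQ := hPQ hpt
      have hy1p : y1 ∈ (fun x => x + t) '' p := ⟨y1 - t, hpy, by simp⟩
      obtain ⟨y2, hy2, hy2p⟩ := mem_closure_iff.mp (tile_regular _ (hQ.2.2.1 _ hpQ) hy1p) _ isOpen_interior hy1q
      have hne : q ≠ (fun x => x + t) '' p := fun h => hqn (h ▸ hpt)
      have := hQ.2.2.2 hq hpQ hne
      have h3 : y2 ∈ interior q ∩ interior ((fun x => x + t) '' p) := ⟨hy2, hy2p⟩
      rw [this] at h3; exact h3
    obtain ⟨p, hp, rfl⟩ := hqP
    obtain ⟨x, hx, rfl⟩ := hy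
    refine ⟨p ∩ boxSet d a b, ⟨p, hp, ⟨x, hx, (hInter x).mp hy'⟩, rfl⟩, ?_⟩
    exact (himg p).symm
  · rintro ⟨_, ⟨p, hp, ⟨x, hx, hx'⟩, rfl⟩, rfl⟩
    exact ⟨(fun x => x + t) '' p, hPQ ⟨p, hp, rfl⟩, ⟨x + t, ⟨x, hx, rfl⟩, (hInter x).mpr hx'⟩, (himg p).symm⟩

/-! ### radii -/

theorem rOut_le (M : Set (Set (Pt d))) (hM : (supp d M).Nonempty) (x : Pt d) (r : ℝ)
    (h : supp d M ⊆ closedBall x r) : rOut d M ≤ r := by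
  refine csInf_le ⟨0, ?_⟩ ⟨x, h⟩
  rintro s ⟨y, hy⟩
  obtain ⟨z, hz⟩ := hM
  exact dist_nonneg.trans (hy hz)

theorem one_le_rOut (M : Set (Set (Pt d))) (hM : IsPattern d M) (x y : Pt d) (hx : x ∈ supp d M) (hy : y ∈ supp d M)
    (hxy : 2 ≤ dist x y) : 1 ≤ rOut d M := by
  refine le_csInf ?_ ?_
  · obtain ⟨r, hr⟩ := (supp_isCompact d M hM).isBounded.subset_closedBall 0
    exact ⟨r, 0, hr⟩
  · rintro s ⟨z, hz⟩
    have h1 := hz hx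
    have h2 := hz hy
    rw [mem_closedBall] at h1 h2
    have := dist_triangle_right x y z
    linarith

theorem exists_ball_of_rOut_lt (M : Set (Set (Pt d))) (hM : IsPattern d M) (r : ℝ) (h : rOut d M < r) :
    ∃ x, supp d M ⊆ closedBall x r := by
  have hne : {r : ℝ | ∃ x : Pt d, supp d M ⊆ Metric.closedBall x r}.Nonempty := by
    obtain ⟨r, hr⟩ := (supp_isCompact d M hM).isBounded.subset_closedBall 0
    exact ⟨r, 0, hr⟩
  obtain ⟨s, ⟨x, hx⟩, hs⟩ := exists_lt_of_csInf_lt hne h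
  exact ⟨x, hx.trans (closedBall_subset_closedBall hs.le)⟩

theorem le_rIn (hd : 0 < d) (M : Set (Set (Pt d))) (hM : IsPattern d M) (x : Pt d) (r : ℝ)
    (h : closedBall x r ⊆ supp d M) : r ≤ rIn d M := by
  refine le_csSup ?_ ⟨x, h⟩
  obtain ⟨R, hR⟩ := (supp_isCompact d M hM).isBounded.subset_closedBall 0
  refine ⟨max R 0, ?_⟩
  rintro s ⟨y, hy⟩
  by_contra hs
  push Not at hs
  have hs0 : 0 < s := (le_max_right _ _).trans_lt hs
  have hsR : R < s := (le_max_left _ _).trans_lt hs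
  let e : Pt d := EuclideanSpace.single ⟨0, hd⟩ s
  have he : ‖e‖ = s := by simp [e, abs_of_pos hs0]
  have h1 := hR (hy (show y + e ∈ closedBall y s by simp [he]))
  have h2 := hR (hy (show y - e ∈ closedBall y s by simp [mem_closedBall, he]))
  rw [mem_closedBall, dist_zero_right] at h1 h2
  have h3 : (2:ℝ) • e = (y + e) - (y - e) := by rw [two_smul]; abel
  have h4 := norm_sub_le (y + e) (y - e)
  rw [← h3, norm_smul, he] at h4
  norm_num at h4
  linarith

theorem exists_cell (u : ℕ → ℝ) (y : ℝ) (k : ℕ) (hk : 0 < k) (h0 : u 0 ≤ y) (h1 : y ≤ u k) :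
    ∃ i < k, u i ≤ y ∧ y ≤ u (i + 1) := by
  induction k with
  | zero => omega
  | succ k ih =>
    by_cases hy : u k ≤ y
    · exact ⟨k, by omega, hy, h1⟩
    · push Not at hy
      rcases Nat.eq_zero_or_pos k with rfl | hk'
      · linarith
      · obtain ⟨i, hi, h⟩ := ih hk' hy.le
        exact ⟨i, by omega, h⟩

theorem mono_of_step (u : ℕ → ℝ) (k : ℕ) (h : ∀ i < k, u i ≤ u (i + 1)) (i i' : ℕ) (hii : i ≤ i') (hk : i' ≤ k) :
    u i ≤ u i' := by
  induction i', hii using Nat.le_induction with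
  | base => exact le_rfl
  | succ m hm ih => exact (ih (by omega)).trans (h m (by omega))

/-- A cell of a grid. -/
def cell (k : Fin d → ℕ) (x : Fin d → ℕ → ℝ) (σ : ∀ j, Fin (k j)) : Set (Pt d) :=
  boxSet d (fun j => x j (σ j)) (fun j => x j (σ j + 1))

theorem sum_cell_vol (a b : Fin d → ℝ) (k : Fin d → ℕ) (x : Fin d → ℕ → ℝ)
    (hx0 : ∀ j, x j 0 = a j) (hxk : ∀ j, x j (k j) = b j) :
    ∑ σ : (∀ j, Fin (k j)), ∏ j, (x j (σ j + 1) - x j (σ j)) = ∏ j, (b j - a j) := by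
  have h1 : ∀ j, b j - a j = ∑ i : Fin (k j), (x j (i + 1) - x j i) := by
    intro j
    rw [Fin.sum_univ_eq_sum_range (fun i => x j (i + 1) - x j i) (k j), Finset.sum_range_sub, hx0, hxk]
  simp_rw [h1]
  rw [Finset.prod_univ_sum]
  simp

theorem cell_subset (a b : Fin d → ℝ) (k : Fin d → ℕ) (x : Fin d → ℕ → ℝ)
    (hx0 : ∀ j, x j 0 = a j) (hxk : ∀ j, x j (k j) = b j)
    (hstep : ∀ j, ∀ i < k j, x j i ≤ x j (i + 1)) (σ : ∀ j, Fin (k j)) : cell d k x σ ⊆ boxSet d a b := by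
  intro y hy j
  have h1 := mono_of_step (x j) (k j) (hstep j) 0 (σ j) (Nat.zero_le _) (σ j).2.le
  have h2 := mono_of_step (x j) (k j) (hstep j) (σ j + 1) (k j) (σ j).2 le_rfl
  rw [hx0] at h1; rw [hxk] at h2
  have := hy j
  exact ⟨h1.trans this.1, this.2.trans h2⟩

theorem subadd_grid (hd : 0 < d) (Ps : Set (Set (Set (Pt d)))) (hadm : Admissible d Ps)
    (F : Set (Set (Pt d)) → ℝ) (dF rF : ℝ) (cF : ℝ → ℝ) (hS : SubadditiveOn d Ps F dF rF cF)
    (P : Set (Set (Pt d))) (hP : P ∈ Ps) (a b : Fin d → ℝ) (hab : ∀ j, a j < b j) (hsub : boxSet d a b ⊆ supp d P)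
    (k : Fin d → ℕ) (x : Fin d → ℕ → ℝ)
    (hx0 : ∀ j, x j 0 = a j) (hxk : ∀ j, x j (k j) = b j) (r : ℝ) (hr : 0 < r) (hrF : rF ≤ r)
    (hstep : ∀ j, ∀ i < k j, r ≤ x j (i + 1) - x j i) :
    F (patRestrict d P (boxSet d a b)) ≤
      ∑ σ : (∀ j, Fin (k j)), F (patRestrict d P (cell d k x σ)) + cF r * ∏ j, (b j - a j) := by
  have hmono : ∀ j, ∀ i < k j, x j i ≤ x j (i + 1) := fun j i hi => by linarith [hstep j i hi]
  have hcs := cell_subset d a b k x hx0 hxk hmono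
  let e := Fintype.equivFin (∀ j, Fin (k j))
  have hsupp := supp_patRestrict d P (hadm.pattern P hP) a b hab hsub
  have hlt : ∀ (σ : ∀ j, Fin (k j)) j, x j (σ j) < x j (σ j + 1) := fun σ j => by
    linarith [hstep j (σ j) (σ j).2]
  have hwid : ∀ σ, r ≤ widthOf d (cell d k x σ) := fun σ =>
    le_widthOf_boxSet d hd _ _ r hr.le (fun j => hstep j _ (σ j).2)
  have hvol : ∀ σ, volOf d (cell d k x σ) = ∏ j, (x j (σ j + 1) - x j (σ j)) := fun σ =>
    volOf_boxSet d _ _ (fun j => (hlt σ j).le)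
  have key := hS.subadd _ (patRestrict_mem d Ps P hP a b hab hsub) _ (fun i => cell d k x (e.symm i))
    (fun i => ⟨_, _, hlt _, rfl⟩)
    (by
      have aux : ∀ σ σ' : (∀ j, Fin (k j)), ∀ j, (σ j : ℕ) < σ' j →
          interior (cell d k x σ) ∩ interior (cell d k x σ') = ∅ := by
        intro σ σ' j hj
        rw [eq_empty_iff_forall_notMem]
        rintro y ⟨hy, hy'⟩
        simp only [cell, interior_boxSet] at hy hy'
        have h1 := (hy j).2
        have h2 := (hy' j).1
        have h3 := mono_of_step (x j) (k j) (hmono j) (σ j + 1) (σ' j) hj (σ' j).2.le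
        linarith
      intro i i' hii
      have hne : e.symm i ≠ e.symm i' := fun h => hii (e.symm.injective h)
      obtain ⟨j, hj⟩ := Function.ne_iff.mp hne
      rcases lt_or_gt_of_ne (fun h => hj (Fin.ext h) : ((e.symm i j : ℕ)) ≠ e.symm i' j) with h | h
      · exact aux _ _ j h
      · rw [inter_comm]; exact aux _ _ j h)
    (by
      rw [hsupp]
      apply Subset.antisymm
      · exact iUnion_subset fun i => hcs _
      · intro y hy
        have hkpos : ∀ j, 0 < k j := by
          intro j
          rcases Nat.eq_zero_or_pos (k j) with h | h
          · have h1 := hxk j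
            rw [h, hx0] at h1
            exact absurd h1 (hab j).ne
          · exact h
        have : ∀ j, ∃ i : Fin (k j), x j i ≤ y j ∧ y j ≤ x j (i + 1) := by
          intro j
          obtain ⟨i, hi, h⟩ := exists_cell (x j) (y j) (k j) (hkpos j) (by rw [hx0]; exact (hy j).1)
            (by rw [hxk]; exact (hy j).2)
          exact ⟨⟨i, hi⟩, h⟩
        choose σ hσ using this
        refine mem_iUnion.mpr ⟨e σ, ?_⟩
        rw [Equiv.symm_apply_apply]
        exact fun j => hσ j)
    (fun i => hrF.trans (hwid _))
  rw [e.symm.sum_comp (fun σ => F (patRestrict d (patRestrict d P (boxSet d a b)) (cell d k x σ))),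
    e.symm.sum_comp (fun σ => cF (widthOf d (cell d k x σ)) * volOf d (cell d k x σ))] at key
  refine key.trans ?_
  simp_rw [patRestrict_patRestrict d P _ _ (hcs _)]
  gcongr
  rw [← sum_cell_vol d a b k x hx0 hxk, Finset.mul_sum]
  refine Finset.sum_le_sum fun σ _ => ?_
  rw [hvol]
  refine mul_le_mul_of_nonneg_right (hS.cF_anti _ _ hrF (hwid σ)) ?_
  exact Finset.prod_nonneg fun j _ => by linarith [hlt σ j]

theorem patVol_box (P : Set (Set (Pt d))) (hP : IsPattern d P) (a b : Fin d → ℝ) (hab : ∀ j, a j < b j)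
    (hsub : boxSet d a b ⊆ supp d P) :
    patVol d (patRestrict d P (boxSet d a b)) = ∏ j, (b j - a j) := by
  rw [patVol, supp_patRestrict d P hP a b hab hsub, volOf_boxSet d a b (fun j => (hab j).le)]

theorem prod_pos_box (a b : Fin d → ℝ) (hab : ∀ j, a j < b j) : 0 < ∏ j, (b j - a j) :=
  Finset.prod_pos fun j _ => by linarith [hab j]

theorem mean_bound (Ps : Set (Set (Set (Pt d)))) (hadm : Admissible d Ps)
    (F : Set (Set (Pt d)) → ℝ) (dF rF : ℝ) (cF : ℝ → ℝ) (hS : SubadditiveOn d Ps F dF rF cF)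
    (r : ℝ) (M : Set (Set (Pt d))) (hM : M ∈ RPatterns d Ps r) :
    |F M / patVol d M| ≤ dF := by
  obtain ⟨P, hP, B, ⟨a, b, hab, rfl, hr⟩, hsub, rfl⟩ := hM
  have h1 := hS.bound _ (patRestrict_mem d Ps P hP a b hab hsub)
  have h2 : 0 < patVol d (patRestrict d P (boxSet d a b)) := by
    rw [patVol_box d P (hadm.pattern P hP) a b hab hsub]; exact prod_pos_box d a b hab
  rw [abs_div, abs_of_pos h2, div_le_iff₀ h2]
  exact h1

theorem le_Fplus (Ps : Set (Set (Set (Pt d)))) (hadm : Admissible d Ps)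
    (F : Set (Set (Pt d)) → ℝ) (dF rF : ℝ) (cF : ℝ → ℝ) (hS : SubadditiveOn d Ps F dF rF cF)
    (r : ℝ) (M : Set (Set (Pt d))) (hM : M ∈ RPatterns d Ps r) :
    F M / patVol d M ≤ Fplus d Ps F r := by
  refine le_csSup ⟨dF, ?_⟩ ⟨M, hM, rfl⟩
  rintro _ ⟨N, hN, rfl⟩
  exact (abs_le.mp (mean_bound d Ps hadm F dF rF cF hS r N hN)).2

theorem upper_bound (Ps : Set (Set (Set (Pt d)))) (hadm : Admissible d Ps)
    (F : Set (Set (Pt d)) → ℝ) (dF rF : ℝ) (cF : ℝ → ℝ) (hS : SubadditiveOn d Ps F dF rF cF)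
    (hd : 0 < d) (P : Set (Set (Pt d))) (hP : P ∈ Ps) (a b : Fin d → ℝ)
    (hsub : boxSet d a b ⊆ supp d P) (r : ℝ) (hr : 0 < r) (hrF : rF ≤ r) (hrab : ∀ j, r ≤ b j - a j) :
    F (patRestrict d P (boxSet d a b)) ≤ (Fplus d Ps F r + cF r) * ∏ j, (b j - a j) := by
  have hab : ∀ j, a j < b j := fun j => by linarith [hrab j]
  let k : Fin d → ℕ := fun j => ⌊(b j - a j) / r⌋₊
  have hk1 : ∀ j, 1 ≤ k j := fun j => by
    apply Nat.le_floor
    rw [Nat.cast_one, one_le_div hr]; exact hrab j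
  have hk1' : ∀ j, (1:ℝ) ≤ k j := fun j => by exact_mod_cast hk1 j
  have hk2 : ∀ j, (k j : ℝ) * r ≤ b j - a j := fun j => by
    rw [← le_div_iff₀ hr]
    exact Nat.floor_le (div_nonneg (by linarith [hab j]) hr.le)
  have hk3 : ∀ j, b j - a j < (k j + 1) * r := fun j => by
    rw [← div_lt_iff₀ hr]
    exact Nat.lt_floor_add_one _
  let x : Fin d → ℕ → ℝ := fun j i => a j + i * ((b j - a j) / k j)
  have hstep : ∀ j i, x j (i + 1) - x j i = (b j - a j) / k j := by
    intro j i; simp only [x]; push_cast; ring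
  have hx0 : ∀ j, x j 0 = a j := fun j => by simp [x]
  have hxk : ∀ j, x j (k j) = b j := fun j => by
    have := hk1' j
    simp only [x]; field_simp; ring
  have hs1 : ∀ j, r ≤ (b j - a j) / k j := fun j => by
    rw [le_div_iff₀ (by linarith [hk1' j])]; linarith [hk2 j]
  have hs2 : ∀ j, (b j - a j) / k j ≤ 2 * r := fun j => by
    rw [div_le_iff₀ (by linarith [hk1' j])]; nlinarith [hk3 j, hk1' j]
  have h1 := subadd_grid d hd Ps hadm F dF rF cF hS P hP a b hab hsub k x hx0 hxk r hr hrF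
    (fun j i _ => by rw [hstep]; exact hs1 j)
  refine h1.trans ?_
  rw [add_mul]
  gcongr
  rw [← sum_cell_vol d a b k x hx0 hxk, Finset.mul_sum]
  refine Finset.sum_le_sum fun σ _ => ?_
  have hlt : ∀ j, x j (σ j) < x j (σ j + 1) := fun j => by linarith [hstep j (σ j), hs1 j]
  have hcs : cell d k x σ ⊆ supp d P :=
    (cell_subset d a b k x hx0 hxk (fun j i _ => by linarith [hstep j i, hs1 j]) σ).trans hsub
  have h2 := le_Fplus d Ps hadm F dF rF cF hS r (patRestrict d P (cell d k x σ))
    ⟨P, hP, _, ⟨_, _, hlt, rfl, fun j => by rw [hstep]; exact ⟨hs1 j, hs2 j⟩⟩, hcs, rfl⟩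
  have h3 : patVol d (patRestrict d P (cell d k x σ)) = ∏ j, (x j (σ j + 1) - x j (σ j)) :=
    patVol_box d P (hadm.pattern P hP) _ _ hlt hcs
  rw [h3, div_le_iff₀ (prod_pos_box d _ _ hlt)] at h2
  exact h2

theorem dim_pos (Ps : Set (Set (Set (Pt d)))) (hne : Ps.Nonempty) (hadm : Admissible d Ps) : 0 < d := by
  rcases Nat.eq_zero_or_pos d with rfl | h
  · exfalso
    obtain ⟨P, hP⟩ := hne
    have hpat := hadm.pattern P hP
    obtain ⟨m, hm⟩ := hpat.2.1
    have h1 : ({m} : Set (Set (Pt 0))) ∈ Ps :=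
      hadm.subClosed P hP _ (isPattern_subset 0 P {m} hpat (by simpa using hm) (singleton_nonempty m)) (by simpa using hm)
    obtain ⟨rmin, rmax, h0, -, h2⟩ := hadm.tileBounds
    have h3 := (h2 m h1).1
    have h4 : rIn 0 {m} = 0 := by
      unfold rIn
      have : {r : ℝ | ∃ x : Pt 0, Metric.closedBall x r ⊆ supp 0 {m}} = univ := by
        ext r
        refine ⟨fun _ => mem_univ _, fun _ => ?_⟩
        obtain ⟨y, hy⟩ := tile_nonempty 0 m (hpat.2.2.1 m hm)
        refine ⟨y, fun z _ => ⟨m, rfl, ?_⟩⟩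
        rwa [Subsingleton.elim z y]
      rw [this, Real.sSup_univ]
    linarith
  · exact h

theorem tile_diam (Ps : Set (Set (Set (Pt d)))) (hadm : Admissible d Ps) :
    ∃ δ : ℝ, 0 < δ ∧ ∀ P ∈ Ps, ∀ m ∈ P, ∀ x ∈ m, ∀ y ∈ m, dist x y ≤ δ := by
  obtain ⟨rmin, rmax, h0, h1, h2⟩ := hadm.tileBounds
  refine ⟨2 * (rmax + 1), by linarith, fun P hP m hm x hx y hy => ?_⟩
  have hpat := hadm.pattern P hP
  have hp1 : IsPattern d {m} := isPattern_subset d P {m} hpat (by simpa using hm) (singleton_nonempty m)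
  have h3 : ({m} : Set (Set (Pt d))) ∈ Ps := hadm.subClosed P hP _ hp1 (by simpa using hm)
  obtain ⟨z, hz⟩ := exists_ball_of_rOut_lt d {m} hp1 (rmax + 1) (by linarith [(h2 m h3).2.2])
  have hx' := mem_closedBall.mp (hz ⟨m, rfl, hx⟩)
  have hy' := mem_closedBall.mp (hz ⟨m, rfl, hy⟩)
  have := dist_triangle_right x y z
  linarith

theorem RPatterns_nonempty (hd : 0 < d) (Ps : Set (Set (Set (Pt d)))) (hne : Ps.Nonempty)
    (hadm : Admissible d Ps) (r : ℝ) (hr : 0 < r) : (RPatterns d Ps r).Nonempty := by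
  obtain ⟨P, hP⟩ := hne
  obtain ⟨x, m, hm, hx⟩ := supp_nonempty d P (hadm.pattern P hP)
  have h0 : (0 : Pt d) ∈ supp d (patTrans d (-x) P) :=
    ⟨_, ⟨m, hm, rfl⟩, ⟨x, hx, by simp⟩⟩
  have hd' : (0:ℝ) < d := by exact_mod_cast hd
  obtain ⟨Q, hQ, -, hsub⟩ := hadm.extend _ (hadm.transClosed (-x) P hP) h0 (d * r) (by positivity)
  refine ⟨_, Q, hQ, boxSet d (fun _ => 0) (fun _ => r), ⟨_, _, fun _ => hr, rfl, fun _ => by constructor <;> linarith⟩, ?_, rfl⟩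
  refine subset_trans ?_ hsub
  intro y hy
  refine mem_closedBall.mpr (dist_le_of_coord d hd y 0 r hr.le fun j => ?_)
  have := hy j
  simp only [PiLp.zero_apply, sub_zero]
  rw [abs_of_nonneg this.1]
  exact this.2

theorem cF_nonneg (Ps : Set (Set (Set (Pt d))))
    (F : Set (Set (Pt d)) → ℝ) (dF rF : ℝ) (cF : ℝ → ℝ) (hS : SubadditiveOn d Ps F dF rF cF)
    (r : ℝ) (hr : rF ≤ r) : 0 ≤ cF r := by
  refine le_of_tendsto hS.cF_lim ?_
  filter_upwards [eventually_ge_atTop r] with s hs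
  exact hS.cF_anti r s hr hs

/-- Subpattern of tiles meeting the interior of a box. -/
theorem sub_box (Ps : Set (Set (Set (Pt d)))) (hadm : Admissible d Ps) (δ : ℝ)
    (hδ : ∀ P ∈ Ps, ∀ m ∈ P, ∀ x ∈ m, ∀ y ∈ m, dist x y ≤ δ) (hd : 0 < d)
    (P : Set (Set (Pt d))) (hP : P ∈ Ps) (a b : Fin d → ℝ) (hab : ∀ j, a j < b j)
    (hsub : boxSet d a b ⊆ supp d P) (r : ℝ) (hr : 2 ≤ r) (hδr : δ ≤ r)
    (hrab : ∀ j, r ≤ b j - a j ∧ b j - a j ≤ 2 * r) :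
    ∃ P₀ ∈ Ps, boxSet d a b ⊆ supp d P₀ ∧ patRestrict d P₀ (boxSet d a b) = patRestrict d P (boxSet d a b) ∧
      1 ≤ rOut d P₀ ∧ rOut d P₀ ≤ 2 * r * d + r := by
  have hpat := hadm.pattern P hP
  let P₀ : Set (Set (Pt d)) := {m ∈ P | (m ∩ interior (boxSet d a b)).Nonempty}
  have hP₀P : P₀ ⊆ P := fun m hm => hm.1
  have hres : patRestrict d P₀ (boxSet d a b) = patRestrict d P (boxSet d a b) := by
    ext s
    constructor
    · rintro ⟨m, hm, h1, h2⟩; exact ⟨m, hm.1, h1, h2⟩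
    · rintro ⟨m, hm, h1, h2⟩; exact ⟨m, ⟨hm, h1⟩, h1, h2⟩
  have hs : boxSet d a b ⊆ supp d P₀ := by
    have h1 := supp_patRestrict d P hpat a b hab hsub
    rw [← hres] at h1
    intro x hx
    rw [← h1] at hx
    obtain ⟨s, ⟨m, hm, -, rfl⟩, hxs⟩ := hx
    exact ⟨m, hm, hxs.1⟩
  obtain ⟨ha, hb⟩ := corner_mem d a b fun j => (hab j).le
  have hne : P₀.Nonempty := by
    obtain ⟨m, hm, -⟩ := hs ha
    exact ⟨m, hm⟩
  have hpat0 := isPattern_subset d P P₀ hpat hP₀P hne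
  refine ⟨P₀, hadm.subClosed P hP _ hpat0 hP₀P, hs, hres, ?_, ?_⟩
  · refine one_le_rOut d P₀ hpat0 _ _ (hs hb) (hs ha) ?_
    have h1 := coord_le_dist d (WithLp.toLp 2 b) (WithLp.toLp 2 a) ⟨0, hd⟩
    have h2 := (hrab ⟨0, hd⟩).1
    have h3 := le_abs_self (b ⟨0, hd⟩ - a ⟨0, hd⟩)
    simp only at h1
    linarith
  · refine rOut_le d P₀ (supp_nonempty d P₀ hpat0) (WithLp.toLp 2 a) _ ?_
    rintro y ⟨m, ⟨hm, z, hzm, hzi⟩, hy⟩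
    have h1 := hδ P hP m hm y hy z hzm
    have hz := interior_subset hzi
    have h2 := dist_le_of_coord d hd z (WithLp.toLp 2 a) (2 * r) (by linarith) fun j => by
      have h3 := hz j
      have h4 := hrab j
      simp only
      rw [abs_of_nonneg (by linarith [h3.1])]
      linarith [h3.2]
    rw [mem_closedBall]
    have := dist_triangle y z (WithLp.toLp 2 a)
    linarith

/-- Occurrence of a pattern deep inside a large box. -/
theorem occurs (Ps : Set (Set (Set (Pt d)))) (hadm : Admissible d Ps) (δ : ℝ)
    (hδ : ∀ P ∈ Ps, ∀ m ∈ P, ∀ x ∈ m, ∀ y ∈ m, dist x y ≤ δ) (hd : 0 < d)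
    (c : ℝ) (hc : 0 < c)
    (hrep : ∀ P ∈ Ps, 1 ≤ rOut d P → ∀ Q ∈ Ps, c * rOut d P ≤ rIn d Q → SubpatternClass d P Q)
    (P₀ : Set (Set (Pt d))) (hP₀ : P₀ ∈ Ps) (ρ : ℝ) (h1 : 1 ≤ rOut d P₀) (hρ : rOut d P₀ ≤ ρ)
    (Q : Set (Set (Pt d))) (hQ : Q ∈ Ps) (z : Pt d) (hz : closedBall z (c * ρ) ⊆ supp d Q) :
    ∃ t : Pt d, patTrans d t P₀ ⊆ Q ∧ ∀ x ∈ supp d P₀, dist (x + t) z ≤ c * ρ + δ := by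
  have hpat := hadm.pattern Q hQ
  have hρ0 : 0 ≤ c * ρ := mul_nonneg hc.le (by linarith)
  let Q' : Set (Set (Pt d)) := {m ∈ Q | (m ∩ closedBall z (c * ρ)).Nonempty}
  have hQ'Q : Q' ⊆ Q := fun m hm => hm.1
  have hs : closedBall z (c * ρ) ⊆ supp d Q' := by
    intro x hx
    obtain ⟨m, hm, hxm⟩ := hz hx
    exact ⟨m, ⟨hm, x, hxm, hx⟩, hxm⟩
  have hne : Q'.Nonempty := by
    obtain ⟨m, hm, -⟩ := hs (mem_closedBall_self hρ0)
    exact ⟨m, hm⟩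
  have hpat' := isPattern_subset d Q Q' hpat hQ'Q hne
  have hQ' := hadm.subClosed Q hQ _ hpat' hQ'Q
  obtain ⟨t, ht⟩ := hrep P₀ hP₀ h1 Q' hQ' ((mul_le_mul_of_nonneg_left hρ hc.le).trans (le_rIn d hd Q' hpat' z _ hs))
  refine ⟨t, ht.trans hQ'Q, ?_⟩
  rintro x ⟨m, hm, hxm⟩
  obtain ⟨hmQ, y, hym, hyb⟩ := ht ⟨m, hm, rfl⟩
  have h2 := hδ Q hQ _ hmQ (x + t) ⟨x, hxm, rfl⟩ y hym
  have := dist_triangle (x + t) y z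
  have := mem_closedBall.mp hyb
  linarith

theorem gap (hd : 0 < d) (Ps : Set (Set (Set (Pt d)))) (hadm : Admissible d Ps)
    (F : Set (Set (Pt d)) → ℝ) (dF rF : ℝ) (cF : ℝ → ℝ) (hS : SubadditiveOn d Ps F dF rF cF)
    (r u e : ℝ) (hr : 0 < r) (hrF : rF ≤ r)
    (hu : ∀ P ∈ Ps, ∀ a b : Fin d → ℝ, boxSet d a b ⊆ supp d P → (∀ j, r ≤ b j - a j) →
      F (patRestrict d P (boxSet d a b)) ≤ u * ∏ j, (b j - a j))
    (P₀ Q : Set (Set (Pt d))) (hP₀ : P₀ ∈ Ps) (hQ : Q ∈ Ps) (t : Pt d) (ht : patTrans d t P₀ ⊆ Q)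
    (a b a' b' : Fin d → ℝ) (hB : boxSet d a b ⊆ supp d P₀) (hD : boxSet d a' b' ⊆ supp d Q)
    (hrab : ∀ j, r ≤ b j - a j) (h1 : ∀ j, r ≤ a j + t j - a' j) (h2 : ∀ j, r ≤ b' j - (b j + t j))
    (hF : F (patRestrict d P₀ (boxSet d a b)) ≤ (u - e) * ∏ j, (b j - a j)) :
    F (patRestrict d Q (boxSet d a' b')) ≤ (u + cF r) * ∏ j, (b' j - a' j) - e * ∏ j, (b j - a j) := by
  have hab : ∀ j, a j < b j := fun j => by linarith [hrab j]
  have hab' : ∀ j, a' j < b' j := fun j => by linarith [hrab j, h1 j, h2 j]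
  let k : Fin d → ℕ := fun _ => 3
  let x : Fin d → ℕ → ℝ := fun j i =>
    if i = 0 then a' j else if i = 1 then a j + t j else if i = 2 then b j + t j else b' j
  have hx0 : ∀ j, x j 0 = a' j := fun j => by simp [x]
  have hxk : ∀ j, x j (k j) = b' j := fun j => by simp [x, k]
  have hstep : ∀ j, ∀ i < k j, r ≤ x j (i + 1) - x j i := by
    intro j i hi
    have hi' : i < 3 := hi
    interval_cases i
    · simpa [x] using h1 j
    · have := hrab j
      simp [x]; linarith
    · simpa [x] using h2 j
  have hmono : ∀ j, ∀ i < k j, x j i ≤ x j (i + 1) := fun j i hi => by linarith [hstep j i hi]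
  have hcs := cell_subset d a' b' k x hx0 hxk hmono
  have h3 := subadd_grid d hd Ps hadm F dF rF cF hS Q hQ a' b' hab' hD k x hx0 hxk r hr hrF hstep
  have h4 := sum_cell_vol d a' b' k x hx0 hxk
  let σ0 : ∀ j, Fin (k j) := fun _ => (1 : Fin 3)
  have hbound : ∀ σ : (∀ j, Fin (k j)), F (patRestrict d Q (cell d k x σ)) ≤
      u * ∏ j, (x j (σ j + 1) - x j (σ j)) - (if σ = σ0 then e * ∏ j, (b j - a j) else 0) := by
    intro σ
    split_ifs with hσ
    · subst hσ
      have hc : cell d k x σ0 = boxSet d (fun j => a j + t j) (fun j => b j + t j) := by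
        unfold cell
        congr 1
      rw [hc, patRestrict_translate d P₀ Q (hadm.pattern Q hQ) t ht a b hB,
        hS.invariant t _ (patRestrict_mem d Ps P₀ hP₀ a b hab hB)]
      have : ∀ j, x j (σ0 j + 1) - x j (σ0 j) = b j - a j := fun j => by
        change (b j + t j) - (a j + t j) = b j - a j
        ring
      simp_rw [this]
      linarith
    · rw [sub_zero]
      exact hu Q hQ _ _ ((hcs σ).trans hD) fun j => hstep j (σ j) (σ j).2
  have h5 := Finset.sum_le_sum fun σ (_ : σ ∈ Finset.univ) => hbound σ
  rw [Finset.sum_sub_distrib, ← Finset.mul_sum, h4, Finset.sum_ite_eq' Finset.univ σ0 (fun _ => e * ∏ j, (b j - a j))] at h5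
  simp only [Finset.mem_univ, if_true] at h5
  linarith

theorem lower (hd : 0 < d) (Ps : Set (Set (Set (Pt d)))) (hne : Ps.Nonempty) (hadm : Admissible d Ps)
    (hlr : LinearlyRepetitive d Ps)
    (F : Set (Set (Pt d)) → ℝ) (dF rF : ℝ) (cF : ℝ → ℝ) (hS : SubadditiveOn d Ps F dF rF cF)
    (L : ℝ)
    (hup : ∀ ε > 0, ∃ R : ℝ, ∀ r ≥ R, ∀ P ∈ Ps, ∀ a b : Fin d → ℝ, boxSet d a b ⊆ supp d P →
      (∀ j, r ≤ b j - a j) → F (patRestrict d P (boxSet d a b)) ≤ (L + ε) * ∏ j, (b j - a j))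
    (hlow : ∃ R, ∀ r ≥ R, L - cF r ≤ Fplus d Ps F r) (ε : ℝ) (hε : 0 < ε) :
    ∃ R : ℝ, ∀ r ≥ R, ∀ M ∈ RPatterns d Ps r, L - ε ≤ F M / patVol d M := by
  obtain ⟨c, hc, hrep⟩ := hlr
  obtain ⟨δ, hδ0, hδ⟩ := tile_diam d Ps hadm
  have hd' : (1:ℝ) ≤ d := by exact_mod_cast hd
  set K : ℝ := 2 * (c * (2 * d + 1) + 2) with hK
  have hcd : 0 < c * (2 * d + 1) := by positivity
  have hK1 : 1 ≤ K := by linarith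
  set κ : ℝ := 1 / (2 * K) ^ d with hκ
  have hκ0 : 0 < κ := by positivity
  obtain ⟨R1, hR1⟩ := hup (ε * κ / 4) (by positivity)
  obtain ⟨R2, hR2⟩ := hlow
  obtain ⟨R3, hR3⟩ := eventually_atTop.mp (hS.cF_lim.eventually (gt_mem_nhds (show 0 < ε * κ / 4 by positivity)))
  refine ⟨max (max R1 R2) (max R3 (max (max δ 2) rF)), fun r hr => ?_⟩
  simp only [ge_iff_le, max_le_iff] at hr
  obtain ⟨⟨hr1, hr2⟩, hr3, ⟨hrδ, hr22⟩, hrF⟩ := hr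
  rintro M ⟨P, hP, B, ⟨a, b, hab, rfl, hrab⟩, hsub, rfl⟩
  by_contra hcon
  push Not at hcon
  have hV := prod_pos_box d a b hab
  rw [patVol_box d P (hadm.pattern P hP) a b hab hsub, div_lt_iff₀ hV] at hcon
  obtain ⟨P₀, hP₀, hB, hres, hro1, hro2⟩ := sub_box d Ps hadm δ hδ hd P hP a b hab hsub r hr22 hrδ hrab
  rw [← hres] at hcon
  have hrpos : 0 < r := by linarith
  have hKr : r ≤ K * r := by nlinarith
  have hcr := hR3 r hr3
  have hcKr := hS.cF_anti r (K * r) hrF hKr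
  have hFK := hR2 (K * r) (by linarith)
  have hle : Fplus d Ps F (K * r) ≤ L + ε * κ / 4 + cF r - ε * κ := by
    refine csSup_le ((RPatterns_nonempty d hd Ps hne hadm (K * r) (by linarith)).image _) ?_
    rintro _ ⟨_, ⟨Q, hQ, _, ⟨a', b', hab', rfl, hrab'⟩, hD, rfl⟩, rfl⟩
    simp only
    have hV' := prod_pos_box d a' b' hab'
    rw [patVol_box d Q (hadm.pattern Q hQ) a' b' hab' hD, div_le_iff₀ hV']
    set ρ : ℝ := 2 * r * d + r with hρ
    have hcρ : c * ρ = c * (2 * d + 1) * r := by rw [hρ]; ring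
    have hKr2 : K * r = 2 * (c * ρ) + 4 * r := by rw [hcρ, hK]; ring
    let z : Pt d := WithLp.toLp 2 (fun j => (a' j + b' j) / 2)
    have hz : ∀ j, z j = (a' j + b' j) / 2 := fun j => rfl
    have hball : closedBall z (c * ρ) ⊆ supp d Q := by
      refine subset_trans ?_ hD
      intro y hy j
      have h1 := (coord_le_dist d y z j).trans (mem_closedBall.mp hy)
      rw [hz, abs_le] at h1
      have h2 := (hrab' j).1
      constructor <;> linarith [h1.1, h1.2]
    obtain ⟨t, ht, htz⟩ := occurs d Ps hadm δ hδ hd c hc hrep P₀ hP₀ ρ hro1 hro2 Q hQ z hball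
    obtain ⟨hca, hcb⟩ := corner_mem d a b fun j => (hab j).le
    have hA := htz _ (hB hca)
    have hBb := htz _ (hB hcb)
    have hg := gap d hd Ps hadm F dF rF cF hS r (L + ε * κ / 4) ε hrpos hrF (hR1 r hr1) P₀ Q hP₀ hQ t ht
      a b a' b' hB hD (fun j => (hrab j).1) (fun j => by
        have h1 := (coord_le_dist d (WithLp.toLp 2 a + t) z j).trans hA
        rw [hz, abs_le] at h1
        simp only [PiLp.add_apply] at h1
        have h2 := (hrab' j).1
        linarith [h1.1]) (fun j => by
        have h1 := (coord_le_dist d (WithLp.toLp 2 b + t) z j).trans hBb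
        rw [hz, abs_le] at h1
        simp only [PiLp.add_apply] at h1
        have h2 := (hrab' j).1
        linarith [h1.2]) (by
        have : 0 ≤ ε * κ / 4 * ∏ j, (b j - a j) := by positivity
        linarith)
    refine hg.trans ?_
    have hVV : κ * ∏ j, (b' j - a' j) ≤ ∏ j, (b j - a j) := by
      have e1 : ∏ j, (b' j - a' j) ≤ (2 * (K * r)) ^ d := by
        refine (Finset.prod_le_prod (g := fun _ => 2 * (K * r)) (fun j _ => by linarith [hab' j]) fun j _ => (hrab' j).2).trans ?_
        simp
      have e2 : r ^ d ≤ ∏ j, (b j - a j) := by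
        refine le_trans ?_ (Finset.prod_le_prod (f := fun _ => r) (fun j _ => hrpos.le) fun j _ => (hrab j).1)
        simp
      calc κ * ∏ j, (b' j - a' j) ≤ κ * (2 * (K * r)) ^ d := by gcongr
        _ = r ^ d := by
          rw [hκ, show 2 * (K * r) = (2 * K) * r by ring, mul_pow (2 * K) r]
          have : (2 * K) ^ d ≠ 0 := by positivity
          field_simp
        _ ≤ _ := e2
    have := mul_le_mul_of_nonneg_left hVV hε.le
    linarith
  linarith [mul_pos hε hκ0]

theorem limit_exists (hd : 0 < d) (Ps : Set (Set (Set (Pt d)))) (hne : Ps.Nonempty) (hadm : Admissible d Ps)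
    (hlr : LinearlyRepetitive d Ps)
    (F : Set (Set (Pt d)) → ℝ) (dF rF : ℝ) (cF : ℝ → ℝ) (hS : SubadditiveOn d Ps F dF rF cF) :
    ∃ L : ℝ, ∀ ε > 0, ∃ R : ℝ, 0 < R ∧ ∀ r ≥ R, ∀ M ∈ RPatterns d Ps r, |F M / patVol d M - L| ≤ ε := by
  set U : ℝ → ℝ := fun r => Fplus d Ps F r + cF r with hU
  set r0 : ℝ := max rF 1 with hr0
  have hpos : ∀ r ≥ r0, 0 < r := fun r hr => by linarith [le_max_right rF 1]
  have hrF : ∀ r ≥ r0, rF ≤ r := fun r hr => (le_max_left rF 1).trans hr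
  have hlb : ∀ r ≥ r0, -dF ≤ U r := fun r hr => by
    obtain ⟨M, hM⟩ := RPatterns_nonempty d hd Ps hne hadm r (hpos r hr)
    have h1 := le_Fplus d Ps hadm F dF rF cF hS r M hM
    have h2 := (abs_le.mp (mean_bound d Ps hadm F dF rF cF hS r M hM)).1
    have h3 := cF_nonneg d Ps F dF rF cF hS r (hrF r hr)
    simp only [hU]; linarith
  have hbdd : BddBelow (U '' Ici r0) := ⟨-dF, by rintro _ ⟨r, hr, rfl⟩; exact hlb r hr⟩
  have hnonempty : (U '' Ici r0).Nonempty := ⟨_, r0, self_mem_Ici, rfl⟩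
  set L := sInf (U '' Ici r0) with hL
  have hup : ∀ ε > 0, ∃ R : ℝ, ∀ r ≥ R, ∀ P ∈ Ps, ∀ a b : Fin d → ℝ, boxSet d a b ⊆ supp d P →
      (∀ j, r ≤ b j - a j) → F (patRestrict d P (boxSet d a b)) ≤ (L + ε) * ∏ j, (b j - a j) := by
    intro ε hε
    obtain ⟨_, ⟨R, hR, rfl⟩, hlt⟩ := exists_lt_of_csInf_lt hnonempty (show sInf (U '' Ici r0) < L + ε by linarith)
    refine ⟨R, fun r hr P hP a b hsub hrab => ?_⟩
    have hR0 := hpos R hR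
    refine (upper_bound d Ps hadm F dF rF cF hS hd P hP a b hsub R hR0 (hrF R hR) fun j => hr.le.trans (hrab j)).trans ?_
    refine mul_le_mul_of_nonneg_right hlt.le (Finset.prod_nonneg fun j _ => ?_)
    linarith [hrab j]
  have hlow : ∃ R, ∀ r ≥ R, L - cF r ≤ Fplus d Ps F r := ⟨r0, fun r hr => by
    have := csInf_le hbdd ⟨r, hr, rfl⟩
    simp only [hU] at this
    linarith⟩
  refine ⟨L, fun ε hε => ?_⟩
  obtain ⟨R1, hR1⟩ := lower d hd Ps hne hadm hlr F dF rF cF hS L hup hlow ε hε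
  obtain ⟨R2, hR2⟩ := hup ε hε
  refine ⟨max 1 (max R1 R2), by simp, fun r hr M hM => ?_⟩
  simp only [ge_iff_le, max_le_iff] at hr
  have h1 := hR1 r hr.2.1 M hM
  obtain ⟨P, hP, B, ⟨a, b, hab, rfl, hrab⟩, hsub, rfl⟩ := hM
  have h2 := hR2 r hr.2.2 P hP a b hsub fun j => (hrab j).1
  rw [patVol_box d P (hadm.pattern P hP) a b hab hsub] at h1 ⊢
  rw [← div_le_iff₀ (prod_pos_box d a b hab)] at h2
  rw [abs_le]
  constructor <;> linarith

theorem main_aux (d : ℕ) (Ps : Set (Set (Set (Pt d))))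
    (hne : Ps.Nonempty) (hadm : Admissible d Ps) (hlr : LinearlyRepetitive d Ps)
    (F : Set (Set (Pt d)) → ℝ)
    (hF : ∃ (dF rF : ℝ) (cF : ℝ → ℝ), SubadditiveOn d Ps F dF rF cF) :
    ∃ L : ℝ,
      Tendsto (Fplus d Ps F) atTop (nhds L) ∧
      Tendsto (Fminus d Ps F) atTop (nhds L) ∧
      ∀ ε : ℝ, 0 < ε → ∃ V : ℝ, 0 < V ∧
        ∀ r : ℝ, 0 < r → ∀ P ∈ RPatterns d Ps r,
          V ≤ patVol d P → |F P / patVol d P - L| < ε := by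
  have hd := dim_pos d Ps hne hadm
  obtain ⟨dF, rF, cF, hS⟩ := hF
  obtain ⟨L, hL⟩ := limit_exists d hd Ps hne hadm hlr F dF rF cF hS
  have hbd : ∀ r, BddAbove ((fun P => F P / patVol d P) '' RPatterns d Ps r) ∧
      BddBelow ((fun P => F P / patVol d P) '' RPatterns d Ps r) := fun r =>
    ⟨⟨dF, by rintro _ ⟨M, hM, rfl⟩; exact (abs_le.mp (mean_bound d Ps hadm F dF rF cF hS r M hM)).2⟩,
     ⟨-dF, by rintro _ ⟨M, hM, rfl⟩; exact (abs_le.mp (mean_bound d Ps hadm F dF rF cF hS r M hM)).1⟩⟩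
  refine ⟨L, ?_, ?_, ?_⟩
  · rw [Metric.tendsto_atTop]
    intro ε hε
    obtain ⟨R, hR, h⟩ := hL (ε / 2) (by linarith)
    refine ⟨R, fun r hr => ?_⟩
    have hn := RPatterns_nonempty d hd Ps hne hadm r (by linarith)
    have h1 : Fplus d Ps F r ≤ L + ε / 2 := csSup_le (hn.image _) (by
      rintro _ ⟨M, hM, rfl⟩
      have := (abs_le.mp (h r hr M hM)).2
      simp only; linarith)
    obtain ⟨M, hM⟩ := hn
    have h2 : F M / patVol d M ≤ Fplus d Ps F r := le_csSup (hbd r).1 ⟨M, hM, rfl⟩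
    have h3 := (abs_le.mp (h r hr M hM)).1
    rw [Real.dist_eq, abs_lt]
    constructor <;> linarith
  · rw [Metric.tendsto_atTop]
    intro ε hε
    obtain ⟨R, hR, h⟩ := hL (ε / 2) (by linarith)
    refine ⟨R, fun r hr => ?_⟩
    have hn := RPatterns_nonempty d hd Ps hne hadm r (by linarith)
    have h1 : L - ε / 2 ≤ Fminus d Ps F r := le_csInf (hn.image _) (by
      rintro _ ⟨M, hM, rfl⟩
      have := (abs_le.mp (h r hr M hM)).1
      simp only; linarith)
    obtain ⟨M, hM⟩ := hn
    have h2 : Fminus d Ps F r ≤ F M / patVol d M := csInf_le (hbd r).2 ⟨M, hM, rfl⟩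
    have h3 := (abs_le.mp (h r hr M hM)).2
    rw [Real.dist_eq, abs_lt]
    constructor <;> linarith
  · intro ε hε
    obtain ⟨R, hR, h⟩ := hL (ε / 2) (by linarith)
    refine ⟨(2 * R) ^ d + 1, by positivity, fun r hr M hM hV => ?_⟩
    have hrR : R ≤ r := by
      by_contra hlt
      push Not at hlt
      obtain ⟨P, hP, B, ⟨a, b, hab, rfl, hrab⟩, hsub, rfl⟩ := hM
      rw [patVol_box d P (hadm.pattern P hP) a b hab hsub] at hV
      have e1 : ∏ j, (b j - a j) ≤ (2 * R) ^ d := by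
        refine (Finset.prod_le_prod (g := fun _ => 2 * R) (fun j _ => by linarith [hab j]) fun j _ => by linarith [(hrab j).2]).trans ?_
        simp
      linarith
    have := h r hrR M hM
    linarith

/-- Theorem 3.1, uniform subadditive ergodic theorem.
For a nonempty admissible linearly repetitive set of abstract patterns and a subadditive
function `F` on its box-patterns, `F⁺(r)` and `F⁻(r)` converge to a common limit `L`,
and `F(P)/|P| → L` as `|P| → ∞` along `𝒫_∞ = ⋃_{r>0} 𝒫(r)`. -/
theorem uniform_subadditive_ergodic (d : ℕ) (Ps : Set (Set (Set (Pt d))))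
    (hne : Ps.Nonempty) (hadm : Admissible d Ps) (hlr : LinearlyRepetitive d Ps)
    (F : Set (Set (Pt d)) → ℝ)
    (hF : ∃ (dF rF : ℝ) (cF : ℝ → ℝ), SubadditiveOn d Ps F dF rF cF) :
    ∃ L : ℝ,
      Tendsto (Fplus d Ps F) atTop (nhds L) ∧
      Tendsto (Fminus d Ps F) atTop (nhds L) ∧
      ∀ ε : ℝ, 0 < ε → ∃ V : ℝ, 0 < V ∧
        ∀ r : ℝ, 0 < r → ∀ P ∈ RPatterns d Ps r,
          V ≤ patVol d P → |F P / patVol d P - L| < ε := by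
  exact main_aux d Ps hne hadm hlr F hF

end
end

section
/- Let T be a tiling of ℝ^d such that 𝒫(T) is admissible and linearly repetitive, and let w be a real-valued function on the boxes of ℝ^d which is subadditive and asymptotically T-invariant. Then there exists L ∈ ℝ such that for every sequence (B_n) of boxes where B_n is an r_n-box and r_n → ∞, the limit lim_{n→∞} w(B_n)/|B_n| exists and equals L (in particular it is independent of the sequence). -/
open Metric Set Filter MeasureTheory Topology

noncomputable section

variable (d : ℕ)

/-- The set `𝒫(T)` of pattern classes of finite subpatterns of a tiling `T`
(as a translation-closed set of concrete patterns). -/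
def patternClassesOf (T : Set (Set (Pt d))) : Set (Set (Set (Pt d))) :=
  {M | IsPattern d M ∧ ∃ t : Pt d, patTrans d t M ⊆ T}

/-- A subadditive function on the boxes of `ℝ^d`, with constants `dw, rw` and error
function `cw`. -/
def BoxFnSubadditive (w : Set (Pt d) → ℝ) (dw rw : ℝ) (cw : ℝ → ℝ) : Prop :=
  0 ≤ dw ∧ 0 ≤ rw ∧ (∀ r s : ℝ, rw ≤ r → r ≤ s → cw s ≤ cw r) ∧
    Tendsto cw atTop (nhds 0) ∧
    (∀ (B : Set (Pt d)) (n : ℕ) (Bj : Fin n → Set (Pt d)),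
      IsBox d B → (∀ j, IsBox d (Bj j)) →
      (∀ i j, i ≠ j → interior (Bj i) ∩ interior (Bj j) = ∅) →
      (⋃ j, Bj j) = B → (∀ j, rw ≤ widthOf d (Bj j)) →
      w B ≤ (∑ j, w (Bj j)) + ∑ j, cw (widthOf d (Bj j)) * volOf d (Bj j)) ∧
    (∀ B : Set (Pt d), IsBox d B → |w B| ≤ dw * volOf d B)

/-- Asymptotic `T`-invariance of a function on boxes: if the pattern `T ∩ B`
translated by `t` equals `T ∩ (B + t)`, then `w(B)` and `w(B+t)` differ by at most
`e_w(ω(B))·|B|`. -/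
def AsympTilingInvariant (T : Set (Set (Pt d))) (w : Set (Pt d) → ℝ)
    (rw : ℝ) (ew : ℝ → ℝ) : Prop :=
  (∀ r s : ℝ, rw ≤ r → r ≤ s → ew s ≤ ew r) ∧ Tendsto ew atTop (nhds 0) ∧
    ∀ (B : Set (Pt d)) (t : Pt d), IsBox d B → rw ≤ widthOf d B →
      patTrans d t (patRestrict d T B) = patRestrict d T ((fun x => x + t) '' B) →
      |w B - w ((fun x => x + t) '' B)| ≤ ew (widthOf d B) * volOf d B

/-- A partition of `[a,b]` into intervals with lengths in `[r,2r]`. -/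
structure IPart (r a b : ℝ) (I : Finset (ℝ × ℝ)) : Prop where
  len : ∀ p ∈ I, r ≤ p.2 - p.1 ∧ p.2 - p.1 ≤ 2 * r
  disj : ∀ p ∈ I, ∀ q ∈ I, p ≠ q → p.2 ≤ q.1 ∨ q.2 ≤ p.1
  cover : ∀ x, x ∈ Set.Icc a b ↔ ∃ p ∈ I, x ∈ Set.Icc p.1 p.2
  sum : ∑ p ∈ I, (p.2 - p.1) = b - a

theorem IPart.sub {r a b : ℝ} {I : Finset (ℝ × ℝ)} (hr : 0 < r) (h : IPart r a b I)
    (p : ℝ × ℝ) (hp : p ∈ I) : a ≤ p.1 ∧ p.2 ≤ b := by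
  have h1 := h.len p hp
  have h2 := (h.cover p.1).2 ⟨p, hp, le_refl _, by linarith⟩
  have h3 := (h.cover p.2).2 ⟨p, hp, by linarith, le_refl _⟩
  exact ⟨h2.1, h3.2⟩

theorem IPart.single {r a b : ℝ} (h1 : r ≤ b - a) (h2 : b - a ≤ 2 * r) :
    IPart r a b {(a, b)} := by
  refine ⟨?_, ?_, ?_, ?_⟩
  · intro p hp
    rw [Finset.mem_singleton] at hp
    subst hp
    exact ⟨h1, h2⟩
  · intro p hp q hq hpq
    simp at hp hq
    exact absurd (hp.trans hq.symm) hpq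
  · intro x; simp
  · simp

theorem IPart.concat {r a b c : ℝ} {I J : Finset (ℝ × ℝ)} (hr : 0 < r)
    (hab : a ≤ b) (hbc : b ≤ c)
    (hI : IPart r a b I) (hJ : IPart r b c J) : IPart r a c (I ∪ J) := by
  refine ⟨?_, ?_, ?_, ?_⟩
  · intro p hp
    rcases Finset.mem_union.1 hp with hp | hp
    · exact hI.len p hp
    · exact hJ.len p hp
  · intro p hp q hq hpq
    rcases Finset.mem_union.1 hp with hp | hp <;> rcases Finset.mem_union.1 hq with hq | hq
    · exact hI.disj p hp q hq hpq
    · exact Or.inl ((hI.sub hr p hp).2.trans (hJ.sub hr q hq).1)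
    · exact Or.inr ((hI.sub hr q hq).2.trans (hJ.sub hr p hp).1)
    · exact hJ.disj p hp q hq hpq
  · intro x
    constructor
    · intro hx
      rcases le_total x b with h | h
      · obtain ⟨p, hp, hx⟩ := (hI.cover x).1 ⟨hx.1, h⟩
        exact ⟨p, Finset.mem_union_left _ hp, hx⟩
      · obtain ⟨p, hp, hx⟩ := (hJ.cover x).1 ⟨h, hx.2⟩
        exact ⟨p, Finset.mem_union_right _ hp, hx⟩
    · rintro ⟨p, hp, hx⟩
      rcases Finset.mem_union.1 hp with hp | hp
      · have := (hI.cover x).2 ⟨p, hp, hx⟩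
        exact ⟨this.1, this.2.trans hbc⟩
      · have := (hJ.cover x).2 ⟨p, hp, hx⟩
        exact ⟨hab.trans this.1, this.2⟩
  · rw [Finset.sum_union, hI.sum, hJ.sum]
    · ring
    · rw [Finset.disjoint_left]
      intro p hp hq
      have h1 := hI.len p hp
      have h2 := hI.sub hr p hp
      have h3 := hJ.sub hr p hq
      linarith

theorem IPart.exists {r : ℝ} (hr : 0 < r) (n : ℕ) : ∀ a b : ℝ, r ≤ b - a → b - a ≤ n * r →
    ∃ I, IPart r a b I := by
  induction n with
  | zero => intro a b h1 h2; simp at h2; linarith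
  | succ n ih =>
    intro a b h1 h2
    by_cases h : b - a ≤ 2 * r
    · exact ⟨_, IPart.single h1 h⟩
    · push Not at h
      push_cast at h2
      obtain ⟨I, hI⟩ := ih (a + r) b (by linarith) (by linarith)
      exact ⟨_, IPart.concat hr (by linarith) (by linarith)
        (IPart.single (a := a) (b := a + r) (by linarith) (by linarith)) hI⟩

theorem IPart.exists' {r a b : ℝ} (hr : 0 < r) (h : r ≤ b - a) : ∃ I, IPart r a b I := by
  obtain ⟨n, hn⟩ := exists_nat_ge ((b - a) / r)
  exact IPart.exists hr n a b h (by rwa [div_le_iff₀ hr] at hn)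

theorem boxSet_vol (d : ℕ) (a b : Fin d → ℝ) (h : ∀ j, a j ≤ b j) :
    volOf d (boxSet d a b) = ∏ j, (b j - a j) := by
  have h1 : boxSet d a b = (@WithLp.ofLp 2 (Fin d → ℝ)) ⁻¹' (Set.Icc a b) := by
    ext x
    simp [boxSet, Pi.le_def, forall_and]
  unfold volOf
  rw [h1, (PiLp.volume_preserving_ofLp (Fin d)).measure_preimage
    measurableSet_Icc.nullMeasurableSet, Real.volume_Icc_pi_toReal h]

theorem boxSet_image (d : ℕ) (a b : Fin d → ℝ) (h : ∀ j, a j ≤ b j) (j : Fin d) :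
    (fun x : Pt d => x j) '' boxSet d a b = Set.Icc (a j) (b j) := by
  ext y
  constructor
  · rintro ⟨x, hx, rfl⟩
    exact hx j
  · intro hy
    refine ⟨WithLp.toLp 2 (Function.update a j y), ?_, by simp⟩
    intro i
    by_cases hi : i = j
    · subst hi; simpa using hy
    · simp [Function.update_of_ne hi, h i]

theorem boxSet_width (d : ℕ) [NeZero d] (a b : Fin d → ℝ) (r : ℝ) (h : ∀ j, a j ≤ b j)
    (hr : ∀ j, r ≤ b j - a j) : r ≤ widthOf d (boxSet d a b) := by
  unfold widthOf
  apply le_ciInf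
  intro j
  rw [boxSet_image d a b h, csSup_Icc (h j), csInf_Icc (h j)]
  exact hr j

theorem boxSet_interior (d : ℕ) (a b : Fin d → ℝ) (x : Pt d)
    (hx : x ∈ interior (boxSet d a b)) (j : Fin d) : a j < x j ∧ x j < b j := by
  have ho : IsOpenMap (fun x : Pt d => x j) := by
    have h1 : IsOpenMap (fun x : Fin d → ℝ => x j) := isOpenMap_eval j
    exact h1.comp (PiLp.homeomorph 2 (fun _ : Fin d => ℝ)).isOpenMap
  have h2 : (fun x : Pt d => x j) '' interior (boxSet d a b) ⊆ Set.Ioo (a j) (b j) := by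
    rw [← interior_Icc]
    apply interior_maximal _ (ho _ isOpen_interior)
    rintro _ ⟨y, hy, rfl⟩
    exact interior_subset hy j
  exact h2 ⟨x, hx, rfl⟩

/-- Subadditivity along a product grid. -/
theorem grid_subadd (d : ℕ) [NeZero d] (w : Set (Pt d) → ℝ) (dw rw0 : ℝ) (cw : ℝ → ℝ)
    (hw : BoxFnSubadditive d w dw rw0 cw) (r : ℝ) (hr : 0 < r) (hrw : rw0 ≤ r)
    (a b : Fin d → ℝ) (hab : ∀ j, a j < b j) (I : Fin d → Finset (ℝ × ℝ))
    (hI : ∀ j, IPart r (a j) (b j) (I j)) :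
    w (boxSet d a b) ≤ ∑ p ∈ Fintype.piFinset I,
      w (boxSet d (fun j => (p j).1) (fun j => (p j).2)) + cw r * ∏ j, (b j - a j) := by
  obtain ⟨-, -, hanti, -, hsub, -⟩ := hw
  set S := Fintype.piFinset I with hS
  set Bx : (Fin d → ℝ × ℝ) → Set (Pt d) :=
    fun p => boxSet d (fun j => (p j).1) (fun j => (p j).2) with hBx
  have hmem : ∀ p ∈ S, ∀ j, p j ∈ I j := fun p hp j => Fintype.mem_piFinset.1 hp j
  have hlt : ∀ p ∈ S, ∀ j, (p j).1 < (p j).2 := fun p hp j => by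
    have := (hI j).len _ (hmem p hp j); linarith
  let e := S.equivFin.symm
  have hwid : ∀ p ∈ S, r ≤ widthOf d (Bx p) := fun p hp =>
    boxSet_width d _ _ r (fun j => (hlt p hp j).le) (fun j => ((hI j).len _ (hmem p hp j)).1)
  have key := hsub (boxSet d a b) S.card (fun i => Bx (e i)) ⟨a, b, hab, rfl⟩
    (fun i => ⟨_, _, hlt _ (e i).2, rfl⟩) ?_ ?_ (fun i => hrw.trans (hwid _ (e i).2))
  · have s1 : ∑ i, w (Bx (e i)) = ∑ p ∈ S, w (Bx p) := by
      rw [← Finset.sum_coe_sort S (fun p => w (Bx p))]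
      exact Equiv.sum_comp e (fun p : S => w (Bx p))
    have s2 : ∑ i, cw (widthOf d (Bx (e i))) * volOf d (Bx (e i))
        = ∑ p ∈ S, cw (widthOf d (Bx p)) * volOf d (Bx p) := by
      rw [← Finset.sum_coe_sort S (fun p => cw (widthOf d (Bx p)) * volOf d (Bx p))]
      exact Equiv.sum_comp e (fun p : S => cw (widthOf d (Bx p)) * volOf d (Bx p))
    have s3 : ∑ p ∈ S, cw (widthOf d (Bx p)) * volOf d (Bx p)
        ≤ ∑ p ∈ S, cw r * volOf d (Bx p) := by
      apply Finset.sum_le_sum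
      intro p hp
      exact mul_le_mul_of_nonneg_right (hanti _ _ hrw (hwid p hp)) ENNReal.toReal_nonneg
    have s4 : ∑ p ∈ S, volOf d (Bx p) = ∏ j, (b j - a j) := by
      rw [Finset.prod_congr rfl (fun j _ => ((hI j).sum).symm), Finset.prod_univ_sum]
      apply Finset.sum_congr rfl
      intro p hp
      exact boxSet_vol d _ _ (fun j => (hlt p hp j).le)
    rw [s1, s2] at key
    rw [← Finset.mul_sum, s4] at s3
    linarith
  · intro i k hik
    have hne : (e i : Fin d → ℝ × ℝ) ≠ e k := fun h => hik (e.injective (Subtype.ext h))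
    obtain ⟨j, hj⟩ := Function.ne_iff.1 hne
    ext x
    simp only [Set.mem_inter_iff, Set.mem_empty_iff_false, iff_false, not_and]
    intro h1 h2
    have h1 := boxSet_interior d _ _ x h1 j
    have h2 := boxSet_interior d _ _ x h2 j
    rcases (hI j).disj _ (hmem _ (e i).2 j) _ (hmem _ (e k).2 j) hj with h | h <;> linarith
  · ext x
    simp only [Set.mem_iUnion]
    constructor
    · rintro ⟨i, hi⟩ j
      exact ((hI j).cover _).2 ⟨_, hmem _ (e i).2 j, hi j⟩
    · intro hx
      choose p hp hp2 using fun j => ((hI j).cover _).1 (hx j)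
      refine ⟨e.symm ⟨p, Fintype.mem_piFinset.2 hp⟩, ?_⟩
      simp only [Equiv.apply_symm_apply]
      exact hp2

theorem ball_le_of_subset (d : ℕ) [NeZero d] (x z : Pt d) (s t : ℝ) (hs : 0 ≤ s)
    (h : closedBall x s ⊆ closedBall z t) : s ≤ t := by
  obtain ⟨v, hv⟩ := exists_norm_eq (Pt d) hs
  have h1 : x + v ∈ closedBall z t := h (by simp [hv])
  have h2 : x - v ∈ closedBall z t := h (by simp [hv])
  rw [mem_closedBall] at h1 h2
  have h3 := dist_triangle_right (x + v) (x - v) z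
  have h4 : dist (x + v) (x - v) = 2 * s := by
    rw [dist_eq_norm, show x + v - (x - v) = (2 : ℝ) • v by rw [two_smul]; abel, norm_smul, hv]
    norm_num
  linarith

theorem patTrans_zero (d : ℕ) (M : Set (Set (Pt d))) : patTrans d 0 M = M := by
  simp [patTrans]

theorem IsTile.compact {d : ℕ} {m : Set (Pt d)} (h : IsTile d m) : IsCompact m := by
  obtain ⟨f⟩ := h
  have : CompactSpace (closedBall (0 : Pt d) 1) :=
    isCompact_iff_compactSpace.1 (isCompact_closedBall _ _)
  exact isCompact_iff_compactSpace.2 f.symm.compactSpace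

theorem IsTile.nonempty {d : ℕ} {m : Set (Pt d)} (h : IsTile d m) : m.Nonempty := by
  obtain ⟨f⟩ := h
  exact ⟨_, (f.symm ⟨0, by simp⟩).2⟩

theorem tiles_bound (d : ℕ) (T : Set (Set (Pt d))) (hT : IsTiling d T)
    (hadm : Admissible d (patternClassesOf d T)) :
    ∃ D ε : ℝ, 0 < D ∧ 0 < ε ∧ (∀ m ∈ T, ∀ x ∈ m, ∀ y ∈ m, dist x y ≤ D) ∧
      ∀ m ∈ T, ∃ x, closedBall x ε ⊆ m := by
  obtain ⟨rmin, rmax, h0, h1, h2⟩ := hadm.tileBounds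
  have hsing : ∀ m ∈ T, ({m} : Set (Set (Pt d))) ∈ patternClassesOf d T := by
    intro m hm
    refine ⟨⟨by simp, by simp, ?_, by simp⟩, 0, ?_⟩
    · simpa using hT.1 m hm
    · rw [patTrans_zero]; simpa using hm
  refine ⟨2 * (rmax + 1), rmin / 2, by linarith, by linarith, ?_, ?_⟩
  · intro m hm x hx y hy
    have h3 := (h2 m (hsing m hm)).2.2
    have h4 : rOut d {m} < rmax + 1 := by linarith
    have hne : {r : ℝ | ∃ x : Pt d, supp d {m} ⊆ Metric.closedBall x r}.Nonempty := by
      obtain ⟨r, hr⟩ := (hT.1 m hm).compact.isBounded.subset_closedBall (0 : Pt d)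
      exact ⟨r, 0, by simpa [supp] using hr⟩
    obtain ⟨r, ⟨z, hz⟩, hr⟩ := exists_lt_of_csInf_lt hne h4
    have hx1 : x ∈ closedBall z r := hz (by simpa [supp] using hx)
    have hy1 : y ∈ closedBall z r := hz (by simpa [supp] using hy)
    rw [mem_closedBall] at hx1 hy1
    have := dist_triangle_right x y z
    linarith
  · intro m hm
    have h3 := (h2 m (hsing m hm)).1
    have h4 : rmin / 2 < rIn d {m} := by linarith
    have hne : {r : ℝ | ∃ x : Pt d, Metric.closedBall x r ⊆ supp d {m}}.Nonempty :=
      ⟨-1, 0, by simp⟩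
    obtain ⟨r, ⟨z, hz⟩, hr⟩ := exists_lt_of_lt_csSup hne h4
    refine ⟨z, (closedBall_subset_closedBall hr.le).trans ?_⟩
    simpa [supp] using hz

/-- Tiles meeting a closed ball. -/
def ballPat (d : ℕ) (T : Set (Set (Pt d))) (x : Pt d) (R : ℝ) : Set (Set (Pt d)) :=
  {m | m ∈ T ∧ (m ∩ closedBall x R).Nonempty}

theorem ballPat_cover (d : ℕ) (T : Set (Set (Pt d))) (hT : IsTiling d T) (x : Pt d) (R : ℝ) :
    closedBall x R ⊆ supp d (ballPat d T x R) := by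
  intro y hy
  have : y ∈ ⋃₀ T := by rw [hT.2.2]; trivial
  obtain ⟨m, hm, hym⟩ := this
  exact ⟨m, ⟨hm, y, hym, hy⟩, hym⟩

theorem ballPat_supp (d : ℕ) (T : Set (Set (Pt d))) (D : ℝ)
    (hD : ∀ m ∈ T, ∀ x ∈ m, ∀ y ∈ m, dist x y ≤ D) (x : Pt d) (R : ℝ) :
    supp d (ballPat d T x R) ⊆ closedBall x (R + D) := by
  rintro y ⟨m, ⟨hm, z, hzm, hz⟩, hym⟩
  rw [mem_closedBall] at hz ⊢
  have := dist_triangle y z x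
  have := hD m hm y hym z hzm
  linarith

theorem ballPat_finite (d : ℕ) (T : Set (Set (Pt d))) (hT : IsTiling d T) (D ε : ℝ)
    (hε : 0 < ε) (hD : ∀ m ∈ T, ∀ x ∈ m, ∀ y ∈ m, dist x y ≤ D)
    (hin : ∀ m ∈ T, ∃ x, closedBall x ε ⊆ m) (x : Pt d) (R : ℝ) :
    (ballPat d T x R).Finite := by
  have key := Measure.finite_const_le_meas_of_disjoint_iUnion (volume : Measure (Pt d))
    (ι := ballPat d T x R) (ε := volume (ball (0 : Pt d) ε)) (measure_ball_pos _ _ hε)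
    (As := fun m => interior m.1) (fun m => isOpen_interior.measurableSet) ?_ ?_
  · have h2 : {i : ballPat d T x R | volume (ball (0 : Pt d) ε) ≤ volume (interior i.1)}
        = Set.univ := by
      apply Set.eq_univ_of_forall
      rintro ⟨m, hm⟩
      obtain ⟨z, hz⟩ := hin m hm.1
      have h3 : ball z ε ⊆ interior m :=
        interior_maximal (ball_subset_closedBall.trans hz) isOpen_ball
      have h4 : volume (ball (0 : Pt d) ε) = volume (ball z ε) := (Measure.addHaar_ball_center volume z ε).symm
      show volume (ball (0 : Pt d) ε) ≤ volume (interior m)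
      rw [h4]
      exact measure_mono h3
    rw [h2] at key
    exact Set.finite_coe_iff.1 (Set.finite_univ_iff.1 key)
  · rintro ⟨m, hm⟩ ⟨m', hm'⟩ hne
    have : m ≠ m' := fun h => hne (Subtype.ext h)
    exact Set.disjoint_iff_inter_eq_empty.2 (hT.2.1 hm.1 hm'.1 this)
  · have h3 : (⋃ i : ballPat d T x R, interior i.1) ⊆ closedBall x (R + D) := by
      refine Set.Subset.trans ?_ (ballPat_supp d T D hD x R)
      apply Set.iUnion_subset
      rintro ⟨m, hm⟩ y hy
      exact ⟨m, hm, interior_subset hy⟩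
    exact (lt_of_le_of_lt (measure_mono h3) measure_closedBall_lt_top).ne

theorem ballPat_mem (d : ℕ) (T : Set (Set (Pt d))) (hT : IsTiling d T)
    (x : Pt d) (R : ℝ) (hR : 0 ≤ R) (hfin : (ballPat d T x R).Finite) :
    ballPat d T x R ∈ patternClassesOf d T := by
  refine ⟨⟨hfin, ?_, fun m hm => hT.1 m hm.1, ?_⟩, 0, ?_⟩
  · obtain ⟨m, hm, -⟩ := ballPat_cover d T hT x R (mem_closedBall_self hR)
    exact ⟨m, hm⟩
  · exact hT.2.1.mono (fun m hm => hm.1)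
  · rw [patTrans_zero]; exact fun m hm => hm.1

theorem open_subset_finite_closed {X : Type*} [TopologicalSpace X] (S : Set (Set X))
    (hS : S.Finite) : (∀ m ∈ S, IsClosed m) → ∀ U : Set X, IsOpen U → U.Nonempty →
      U ⊆ ⋃₀ S → ∃ m ∈ S, (interior m ∩ U).Nonempty := by
  induction S, hS using Set.Finite.induction_on with
  | empty =>
    intro _ U _ hne hU
    obtain ⟨x, hx⟩ := hne
    obtain ⟨m, hm, -⟩ := hU hx
    exact absurd hm (Set.notMem_empty _)
  | insert _ _ ih =>
    rename_i m S _ _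
    intro hc U hU hne hsub
    by_cases h : U ⊆ m
    · obtain ⟨x, hx⟩ := hne
      exact ⟨m, Set.mem_insert _ _, x, interior_maximal h hU hx, hx⟩
    · obtain ⟨x, hx, hxm⟩ := Set.not_subset.1 h
      obtain ⟨k, hk, y, hy1, hy2⟩ := ih (fun m hm => hc m (Set.mem_insert_of_mem _ hm)) (U \ m)
        (hU.sdiff (hc m (Set.mem_insert _ _))) ⟨x, hx, hxm⟩ (by
          rintro y ⟨hy, hym⟩
          obtain ⟨k, hk, hyk⟩ := hsub hy
          rcases hk with rfl | hk
          · exact absurd hyk hym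
          · exact ⟨k, hk, hyk⟩)
      exact ⟨k, Set.mem_insert_of_mem _ hk, y, hy1, hy2.1⟩

theorem interior_trans (d : ℕ) (t : Pt d) (B : Set (Pt d)) :
    interior ((fun x => x + t) '' B) = (fun x => x + t) '' interior B :=
  ((Homeomorph.addRight t).image_interior B).symm

theorem restrict_trans (d : ℕ) (T : Set (Set (Pt d))) (hT : IsTiling d T) (D ε : ℝ)
    (hD0 : 0 < D) (hε : 0 < ε) (hD : ∀ m ∈ T, ∀ x ∈ m, ∀ y ∈ m, dist x y ≤ D)
    (hin : ∀ m ∈ T, ∃ x, closedBall x ε ⊆ m) (x t : Pt d) (R : ℝ)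
    (ht : patTrans d t (ballPat d T x (R + D)) ⊆ T)
    (B : Set (Pt d)) (hB : B ⊆ closedBall x R) :
    patTrans d t (patRestrict d T B) = patRestrict d T ((fun x => x + t) '' B) := by
  have hinj : Function.Injective (fun x : Pt d => x + t) := add_left_injective t
  ext s
  constructor
  · rintro ⟨_, ⟨m, hm, ⟨y, hym, hyB⟩, rfl⟩, rfl⟩
    have hyR := hB (interior_subset hyB)
    refine ⟨(fun x => x + t) '' m, ht ⟨m, ⟨hm, y, hym, ?_⟩, rfl⟩, ?_, ?_⟩
    · exact closedBall_subset_closedBall (by linarith) hyR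
    · rw [interior_trans]
      exact ⟨y + t, ⟨y, hym, rfl⟩, ⟨y, hyB, rfl⟩⟩
    · exact Set.image_inter hinj
  · rintro ⟨m', hm', ⟨y', hym, hyB⟩, rfl⟩
    rw [interior_trans] at hyB
    obtain ⟨y, hyB, rfl⟩ := hyB
    -- the tile is a translate of a tile in the ball pattern
    obtain ⟨z, hz⟩ := hin m' hm'
    have hUo : (ball z ε).Nonempty := ⟨z, mem_ball_self hε⟩
    have hfin := ballPat_finite d T hT D ε hε hD hin x (R + D)
    obtain ⟨k, ⟨m, hm, rfl⟩, q, hq1, hq2⟩ := open_subset_finite_closed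
      (patTrans d t (ballPat d T x (R + D))) (hfin.image _)
      (fun m hm => (hT.1 m (ht hm)).compact.isClosed) (ball z ε) isOpen_ball hUo (by
        intro u hu
        have hum : u ∈ m' := hz (ball_subset_closedBall hu)
        have h1 := hD m' hm' u hum _ hym
        have h2 := hB (interior_subset hyB)
        have h3 : u - t ∈ closedBall x (R + D) := by
          rw [mem_closedBall] at h2 ⊢
          have h4 := dist_triangle (u - t) y x
          have h5 : dist (u - t) y = dist u (y + t) := by
            rw [dist_eq_norm, dist_eq_norm]; congr 1; abel
          linarith
        obtain ⟨m, hm, hmu⟩ := ballPat_cover d T hT x (R + D) h3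
        exact ⟨_, ⟨m, hm, rfl⟩, u - t, hmu, by simp⟩)
    have hmT := ht ⟨m, hm, rfl⟩
    have heq : m' = (fun x => x + t) '' m := by
      by_contra hne
      have h1 := hT.2.1 hm' hmT hne
      have h2 : q ∈ interior m' :=
        interior_maximal (ball_subset_closedBall.trans hz) isOpen_ball hq2
      have h3 : q ∈ interior m' ∩ interior ((fun x => x + t) '' m) := ⟨h2, hq1⟩
      rw [h1] at h3
      exact h3
    subst heq
    refine ⟨m ∩ B, ⟨m, hm.1, ⟨y, ?_, hyB⟩, rfl⟩, Set.image_inter hinj⟩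
    obtain ⟨y2, hy2, he⟩ := hym
    rwa [← hinj he]

/-- Geometric consequence of linear repetitivity. -/
theorem recur (d : ℕ) [NeZero d] (T : Set (Set (Pt d))) (hT : IsTiling d T)
    (hadm : Admissible d (patternClassesOf d T))
    (hlr : LinearlyRepetitive d (patternClassesOf d T)) :
    ∃ C R0 : ℝ, 0 < C ∧ 0 < R0 ∧ ∀ R, R0 ≤ R → ∀ x y : Pt d, ∃ t : Pt d,
      (∀ u ∈ closedBall x R, u + t ∈ closedBall y (C * R)) ∧
      ∀ B ⊆ closedBall x R,
        patTrans d t (patRestrict d T B) = patRestrict d T ((fun x => x + t) '' B) := by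
  obtain ⟨D, ε, hD0, hε, hD, hin⟩ := tiles_bound d T hT hadm
  obtain ⟨c, hc, hlr⟩ := hlr
  refine ⟨3 * c + 1, max 1 D, by linarith, by positivity, ?_⟩
  intro R hR x y
  have hR1 : 1 ≤ R := (le_max_left _ _).trans hR
  have hRD : D ≤ R := (le_max_right _ _).trans hR
  have hfin := ballPat_finite d T hT D ε hε hD hin
  set P := ballPat d T x (R + D) with hP
  set Q := ballPat d T y (c * (3 * R)) with hQ
  have hPm : P ∈ patternClassesOf d T := ballPat_mem d T hT x _ (by linarith) (hfin _ _)
  have hQm : Q ∈ patternClassesOf d T := ballPat_mem d T hT y _ (by positivity) (hfin _ _)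
  have hPc := ballPat_cover d T hT x (R + D)
  have hQc := ballPat_cover d T hT y (c * (3 * R))
  have hPs := ballPat_supp d T D hD x (R + D)
  have hQs := ballPat_supp d T D hD y (c * (3 * R))
  have hlow : ∀ r ∈ {r : ℝ | ∃ x : Pt d, supp d P ⊆ Metric.closedBall x r}, 1 ≤ r := by
    rintro r ⟨z, hz⟩
    have := ball_le_of_subset d x z (R + D) r (by linarith) (hPc.trans hz)
    linarith
  have hmem : R + D + D ∈ {r : ℝ | ∃ x : Pt d, supp d P ⊆ Metric.closedBall x r} := ⟨x, hPs⟩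
  have h1 : 1 ≤ rOut d P := le_csInf ⟨_, hmem⟩ hlow
  have h2 : rOut d P ≤ R + D + D := csInf_le ⟨1, hlow⟩ hmem
  have h3 : c * (3 * R) ≤ rIn d Q := by
    apply le_csSup
    · refine ⟨c * (3 * R) + D, ?_⟩
      rintro r ⟨z, hz⟩
      rcases le_or_gt 0 r with hr | hr
      · exact ball_le_of_subset d z y r _ hr (hz.trans hQs)
      · have : 0 < c * (3 * R) := by positivity
        linarith
    · exact ⟨y, hQc⟩
  obtain ⟨t, ht⟩ := hlr P hPm h1 Q hQm (le_trans (by gcongr; linarith) h3)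
  refine ⟨t, ?_, fun B hB => restrict_trans d T hT D ε hD0 hε hD hin x t R
    (ht.trans (fun m hm => hm.1)) B hB⟩
  intro u hu
  obtain ⟨m, hm, hum⟩ := hPc (closedBall_subset_closedBall (by linarith) hu)
  have h4 := hQs ⟨_, ht ⟨m, hm, rfl⟩, u, hum, rfl⟩
  refine closedBall_subset_closedBall ?_ h4
  linarith

theorem boxSet_trans (d : ℕ) (a b : Fin d → ℝ) (t : Pt d) :
    (fun x => x + t) '' boxSet d a b = boxSet d (fun j => a j + t j) (fun j => b j + t j) := by
  ext y
  constructor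
  · rintro ⟨x, hx, rfl⟩ j
    have := hx j
    simp only [PiLp.add_apply]
    exact ⟨by linarith [this.1], by linarith [this.2]⟩
  · intro hy
    refine ⟨y - t, fun j => ?_, by simp⟩
    have := hy j
    simp only [PiLp.sub_apply]
    exact ⟨by linarith [this.1], by linarith [this.2]⟩

theorem boxSet_subset_ball (d : ℕ) (a b : Fin d → ℝ) (r : ℝ) (hr : 0 < r)
    (h : ∀ j, b j - a j ≤ 2 * r) :
    boxSet d a b ⊆ closedBall (WithLp.toLp 2 (fun j => (a j + b j) / 2) : Pt d) (d * r) := by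
  intro x hx
  rw [mem_closedBall, EuclideanSpace.dist_eq]
  apply Real.sqrt_le_iff.2
  refine ⟨by positivity, ?_⟩
  have h1 : ∀ j : Fin d, dist (x j)
      ((WithLp.toLp 2 (fun j => (a j + b j) / 2) : Pt d) j) ^ 2 ≤ r ^ 2 := by
    intro j
    apply pow_le_pow_left₀ dist_nonneg
    rw [Real.dist_eq, abs_le]
    have h2 := hx j
    have h3 := h j
    constructor
    · simp only []; linarith [h2.1]
    · simp only []; linarith [h2.2]
  refine (Finset.sum_le_sum (fun j _ => h1 j)).trans ?_
  simp only [Finset.sum_const, Finset.card_univ, Fintype.card_fin, nsmul_eq_mul]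
  rw [mul_pow]
  have h4 : (d : ℝ) ≤ (d : ℝ) ^ 2 := by exact_mod_cast Nat.le_self_pow (by norm_num) d
  gcongr

/-- Boxes all of whose sides are at least `r` inherit upper bounds from `r`-boxes. -/
theorem upper_step (d : ℕ) [NeZero d] (w : Set (Pt d) → ℝ) (dw rw0 : ℝ) (cw : ℝ → ℝ)
    (hw : BoxFnSubadditive d w dw rw0 cw) (r : ℝ) (hr : 0 < r) (hrw : rw0 ≤ r) (K : ℝ)
    (hK : ∀ a b : Fin d → ℝ, (∀ j, r ≤ b j - a j ∧ b j - a j ≤ 2 * r) →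
      w (boxSet d a b) ≤ K * ∏ j, (b j - a j))
    (a b : Fin d → ℝ) (hab : ∀ j, r ≤ b j - a j) :
    w (boxSet d a b) ≤ (K + cw r) * ∏ j, (b j - a j) := by
  choose I hI using fun j => IPart.exists' hr (hab j)
  have h1 := grid_subadd d w dw rw0 cw hw r hr hrw a b (fun j => by linarith [hab j]) I hI
  have h2 : ∑ p ∈ Fintype.piFinset I, w (boxSet d (fun j => (p j).1) (fun j => (p j).2))
      ≤ ∑ p ∈ Fintype.piFinset I, K * ∏ j, ((p j).2 - (p j).1) := by
    apply Finset.sum_le_sum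
    intro p hp
    exact hK _ _ (fun j => (hI j).len _ (Fintype.mem_piFinset.1 hp j))
  rw [← Finset.mul_sum, ← Finset.prod_univ_sum I (fun _ p => p.2 - p.1),
    Finset.prod_congr rfl (fun j _ => (hI j).sum)] at h2
  linarith

/-- A box with a distinguished sub-box of small mean. -/
theorem strict_step (d : ℕ) [NeZero d] (w : Set (Pt d) → ℝ) (dw rw0 : ℝ) (cw : ℝ → ℝ)
    (hw : BoxFnSubadditive d w dw rw0 cw) (r : ℝ) (hr : 0 < r) (hrw : rw0 ≤ r) (K K' : ℝ)
    (hK : ∀ a b : Fin d → ℝ, (∀ j, r ≤ b j - a j ∧ b j - a j ≤ 2 * r) →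
      w (boxSet d a b) ≤ K * ∏ j, (b j - a j))
    (a b a' b' : Fin d → ℝ) (h1 : ∀ j, r ≤ a' j - a j) (h2 : ∀ j, r ≤ b j - b' j)
    (h3 : ∀ j, r ≤ b' j - a' j ∧ b' j - a' j ≤ 2 * r)
    (h4 : w (boxSet d a' b') ≤ K' * ∏ j, (b' j - a' j)) :
    w (boxSet d a b) ≤ (K + cw r) * ∏ j, (b j - a j) - (K - K') * ∏ j, (b' j - a' j) := by
  have hex : ∀ j, ∃ I, IPart r (a j) (b j) I ∧ (a' j, b' j) ∈ I := by
    intro j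
    obtain ⟨I, hI⟩ := IPart.exists' hr (h1 j)
    obtain ⟨J, hJ⟩ := IPart.exists' hr (h2 j)
    have hM := IPart.single (h3 j).1 (h3 j).2
    have q1 := h1 j
    have q2 := h2 j
    have q3 := (h3 j).1
    refine ⟨_, IPart.concat hr (by linarith) (by linarith)
      (IPart.concat hr (by linarith) (by linarith) hI hM) hJ, ?_⟩
    simp
  choose I hI hmem using hex
  have k1 := grid_subadd d w dw rw0 cw hw r hr hrw a b
    (fun j => by linarith [h1 j, h2 j, (h3 j).1]) I hI
  set p0 : Fin d → ℝ × ℝ := fun j => (a' j, b' j) with hp0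
  have hp0m : p0 ∈ Fintype.piFinset I := Fintype.mem_piFinset.2 hmem
  have k2 : ∑ p ∈ Fintype.piFinset I, w (boxSet d (fun j => (p j).1) (fun j => (p j).2))
      ≤ ∑ p ∈ Fintype.piFinset I, (K * ∏ j, ((p j).2 - (p j).1)
        - if p = p0 then (K - K') * ∏ j, (b' j - a' j) else 0) := by
    apply Finset.sum_le_sum
    intro p hp
    by_cases h : p = p0
    · rw [if_pos h, h]
      simp only [hp0]
      linarith
    · rw [if_neg h, sub_zero]
      exact hK _ _ (fun j => (hI j).len _ (Fintype.mem_piFinset.1 hp j))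
  rw [Finset.sum_sub_distrib, Finset.sum_ite_eq' _ p0, if_pos hp0m,
    ← Finset.mul_sum, ← Finset.prod_univ_sum I (fun _ p => p.2 - p.1),
    Finset.prod_congr rfl (fun j _ => (hI j).sum)] at k2
  linarith

theorem main_pos (d : ℕ) [NeZero d] (T : Set (Set (Pt d)))
    (hT : IsTiling d T)
    (hadm : Admissible d (patternClassesOf d T))
    (hlr : LinearlyRepetitive d (patternClassesOf d T))
    (w : Set (Pt d) → ℝ) (dw rw0 : ℝ) (cw ew : ℝ → ℝ)
    (hw : BoxFnSubadditive d w dw rw0 cw) (hinv : AsympTilingInvariant d T w rw0 ew) :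
    ∃ L : ℝ, ∀ ε > 0, ∃ r0 : ℝ, ∀ r, r0 ≤ r → ∀ a b : Fin d → ℝ,
      (∀ j, r ≤ b j - a j ∧ b j - a j ≤ 2 * r) →
      (L - ε) * ∏ j, (b j - a j) ≤ w (boxSet d a b) ∧
      w (boxSet d a b) ≤ (L + ε) * ∏ j, (b j - a j) := by
  obtain ⟨C0, R0, hC0, hR0, hrec⟩ := recur d T hT hadm hlr
  have hw' := hw
  obtain ⟨hdw, hrw0, hcanti, hclim, hsub, hbd⟩ := hw'
  obtain ⟨heanti, helim, hinv⟩ := hinv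
  have hd1 : (1 : ℝ) ≤ d := by exact_mod_cast NeZero.one_le
  have hbd' : ∀ a b : Fin d → ℝ, (∀ j, a j < b j) →
      |w (boxSet d a b)| ≤ dw * ∏ j, (b j - a j) := by
    intro a b hab
    have := hbd _ ⟨a, b, hab, rfl⟩
    rwa [boxSet_vol d a b (fun j => (hab j).le)] at this
  set S : Set ℝ := {K | ∃ r0 : ℝ, ∀ r, r0 ≤ r → ∀ a b : Fin d → ℝ,
      (∀ j, r ≤ b j - a j ∧ b j - a j ≤ 2 * r) →
      w (boxSet d a b) ≤ K * ∏ j, (b j - a j)} with hS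
  have hSne : S.Nonempty := by
    refine ⟨dw, 1, fun r hr a b hab => ?_⟩
    exact (le_abs_self _).trans (hbd' a b (fun j => by linarith [(hab j).1]))
  have hSbd : BddBelow S := by
    refine ⟨-dw, ?_⟩
    rintro K ⟨r0, hK⟩
    have h1 := hK (max r0 1) (le_max_left _ _) (fun _ => 0) (fun _ => max r0 1) (fun j => by
      have : (0:ℝ) < max r0 1 := by positivity
      constructor <;> linarith)
    have hm : (0:ℝ) < max r0 1 := by positivity
    have h2 := (abs_le.1 (hbd' (fun _ => 0) (fun _ => max r0 1) (fun j => hm))).1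
    have h3 : 0 < ∏ j : Fin d, (max r0 1 - 0) := Finset.prod_pos (fun j _ => by simp)
    have h4 : -dw * ∏ j : Fin d, (max r0 1 - 0) ≤ K * ∏ j : Fin d, (max r0 1 - 0) := by linarith
    exact le_of_mul_le_mul_right h4 h3
  set L := sInf S with hL
  have hup : ∀ η > 0, ∃ r0 : ℝ, ∀ r, r0 ≤ r → ∀ a b : Fin d → ℝ,
      (∀ j, r ≤ b j - a j ∧ b j - a j ≤ 2 * r) →
      w (boxSet d a b) ≤ (L + η) * ∏ j, (b j - a j) := by
    intro η hη
    obtain ⟨K, ⟨r0, hK⟩, hKL⟩ := exists_lt_of_csInf_lt hSne (show sInf S < L + η by linarith)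
    refine ⟨max r0 1, fun r hr a b hab => (hK r ((le_max_left _ _).trans hr) a b hab).trans ?_⟩
    have hr1 : 1 ≤ r := (le_max_right _ _).trans hr
    apply mul_le_mul_of_nonneg_right hKL.le
    exact Finset.prod_nonneg (fun j _ => by linarith [(hab j).1])
  refine ⟨L, ?_⟩
  -- constant for the size of the large boxes
  set C : ℝ := 2 * (C0 * d + 1) with hC
  have hC0d : 0 < C0 * d := by positivity
  have hC2 : 2 < C := by linarith
  have hCpos : 0 < C := by linarith
  have hlow : ∀ ε > 0, ∃ r0 : ℝ, ∀ r, r0 ≤ r → ∀ a b : Fin d → ℝ,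
      (∀ j, r ≤ b j - a j ∧ b j - a j ≤ 2 * r) →
      (L - ε) * ∏ j, (b j - a j) ≤ w (boxSet d a b) := by
    intro ε hε
    by_contra hcon
    push Not at hcon
    set δ : ℝ := (1 / (2 * C)) ^ d with hδ
    have hδ0 : 0 < δ := by positivity
    set η : ℝ := ε * δ / 8 with hη
    have hη0 : 0 < η := by positivity
    obtain ⟨r1, hr1⟩ := hup η hη0
    obtain ⟨r2, hr2⟩ := eventually_atTop.1 (hclim.eventually (gt_mem_nhds hη0))
    obtain ⟨r3, hr3⟩ := eventually_atTop.1 (helim.eventually (gt_mem_nhds hη0))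
    obtain ⟨r, hr, a, b, hab, hbad⟩ := hcon (max (max (max r1 r2) (max r3 R0)) (max rw0 1))
    simp only [max_le_iff] at hr
    obtain ⟨⟨⟨q1, q2⟩, q3, q4⟩, q5, q6⟩ := hr
    have hr0 : 0 < r := by linarith
    have hCr : r ≤ C * r := by nlinarith
    have habl : ∀ j, a j < b j := fun j => by linarith [(hab j).1]
    have hVpos : 0 < ∏ j, (b j - a j) := Finset.prod_pos (fun j _ => by linarith [habl j])
    have hVlow : r ^ d ≤ ∏ j, (b j - a j) := by
      calc r ^ d = ∏ _j : Fin d, r := by simp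
        _ ≤ _ := Finset.prod_le_prod (fun _ _ => hr0.le) (fun j _ => (hab j).1)
    -- every `C r`-box has mean at most `L - 6 η`
    have hbig : ∀ a1 b1 : Fin d → ℝ,
        (∀ j, C * r ≤ b1 j - a1 j ∧ b1 j - a1 j ≤ 2 * (C * r)) →
        w (boxSet d a1 b1) ≤ (L - 6 * η) * ∏ j, (b1 j - a1 j) := by
      intro a1 b1 h1
      have hdr : R0 ≤ d * r := by nlinarith
      obtain ⟨t, ht1, ht2⟩ := hrec (d * r) hdr
        (WithLp.toLp 2 (fun j => (a j + b j) / 2)) (WithLp.toLp 2 (fun j => (a1 j + b1 j) / 2))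
      have hBsub := boxSet_subset_ball d a b r hr0 (fun j => (hab j).2)
      have ht2 := ht2 _ hBsub
      have hwid : r ≤ widthOf d (boxSet d a b) :=
        boxSet_width d a b r (fun j => (habl j).le) (fun j => (hab j).1)
      have hi := hinv (boxSet d a b) t ⟨a, b, habl, rfl⟩ (q5.trans hwid) ht2
      rw [boxSet_trans, boxSet_vol d a b (fun j => (habl j).le)] at hi
      have he : ew (widthOf d (boxSet d a b)) ≤ η :=
        (heanti _ _ q5 hwid).trans (hr3 r q3).le
      have hi2 : w (boxSet d (fun j => a j + t j) (fun j => b j + t j))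
          ≤ (L - ε + η) * ∏ j, ((b j + t j) - (a j + t j)) := by
        have e1 : ∏ j, ((b j + t j) - (a j + t j)) = ∏ j, (b j - a j) :=
          Finset.prod_congr rfl (fun j _ => by ring)
        rw [e1]
        have e2 := (abs_le.1 hi).1
        have e3 := mul_le_mul_of_nonneg_right he hVpos.le
        linarith
      have hcoord : ∀ u ∈ boxSet d a b, ∀ j, |u j + t j - (a1 j + b1 j) / 2| ≤ C0 * (d * r) := by
        intro u hu j
        have h2 := ht1 u (hBsub hu)
        rw [mem_closedBall, dist_eq_norm] at h2
        have h3 := PiLp.norm_apply_le (u + t - WithLp.toLp 2 (fun j => (a1 j + b1 j) / 2)) j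
        rw [Real.norm_eq_abs] at h3
        exact h3.trans h2
      have ha : ∀ j, |a j + t j - (a1 j + b1 j) / 2| ≤ C0 * (d * r) :=
        hcoord (WithLp.toLp 2 a) (fun j => ⟨le_refl _, (habl j).le⟩)
      have hb : ∀ j, |b j + t j - (a1 j + b1 j) / 2| ≤ C0 * (d * r) :=
        hcoord (WithLp.toLp 2 b) (fun j => ⟨(habl j).le, le_refl _⟩)
      have hCe : C * r = 2 * (C0 * (d * r)) + 2 * r := by rw [hC]; ring
      have hs := strict_step d w dw rw0 cw hw r hr0 q5 (L + η) (L - ε + η) (hr1 r q1)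
        a1 b1 (fun j => a j + t j) (fun j => b j + t j)
        (fun j => by
          have g1 := (abs_le.1 (ha j)).1
          have g2 := (h1 j).1
          show r ≤ a j + t j - a1 j
          linarith)
        (fun j => by
          have g1 := (abs_le.1 (hb j)).2
          have g2 := (h1 j).1
          show r ≤ b1 j - (b j + t j)
          linarith)
        (fun j => by
          have := hab j
          constructor
          · show r ≤ b j + t j - (a j + t j)
            linarith
          · show b j + t j - (a j + t j) ≤ 2 * r
            linarith) hi2
      have e1 : ∏ j, ((b j + t j) - (a j + t j)) = ∏ j, (b j - a j) :=
        Finset.prod_congr rfl (fun j _ => by ring)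
      rw [e1] at hs
      have hV1 : ∏ j, (b1 j - a1 j) ≤ (2 * (C * r)) ^ d := by
        calc _ ≤ ∏ _j : Fin d, (2 * (C * r)) := Finset.prod_le_prod
              (fun j _ => by linarith [(h1 j).1]) (fun j _ => (h1 j).2)
          _ = _ := by simp
      have hV1pos : 0 ≤ ∏ j, (b1 j - a1 j) :=
        Finset.prod_nonneg (fun j _ => by linarith [(h1 j).1])
      have hVV : δ * ∏ j, (b1 j - a1 j) ≤ ∏ j, (b j - a j) := by
        calc _ ≤ δ * (2 * (C * r)) ^ d := by gcongr
          _ = r ^ d := by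
            rw [hδ, ← mul_pow]; congr 1; field_simp
          _ ≤ _ := hVlow
      have hfin : cw r * ∏ j, (b1 j - a1 j) ≤ η * ∏ j, (b1 j - a1 j) :=
        mul_le_mul_of_nonneg_right (hr2 r q2).le hV1pos
      have hg : ε * (δ * ∏ j, (b1 j - a1 j)) ≤ ε * ∏ j, (b j - a j) :=
        mul_le_mul_of_nonneg_left hVV hε.le
      have hη8 : ε * δ = 8 * η := by rw [hη]; ring
      rw [← mul_assoc, hη8] at hg
      linarith
    have hmemS : L - 5 * η ∈ S := by
      refine ⟨C * r, fun s hs a1 b1 h1 => ?_⟩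
      have hk := upper_step d w dw rw0 cw hw (C * r) (by positivity) (q5.trans hCr) _ hbig
        a1 b1 (fun j => hs.trans (h1 j).1)
      have hV1pos : 0 ≤ ∏ j, (b1 j - a1 j) :=
        Finset.prod_nonneg (fun j _ => by linarith [(h1 j).1])
      have hfin : cw (C * r) * ∏ j, (b1 j - a1 j) ≤ η * ∏ j, (b1 j - a1 j) :=
        mul_le_mul_of_nonneg_right (hr2 _ (q2.trans hCr)).le hV1pos
      linarith
    have := csInf_le hSbd hmemS
    linarith
  intro ε hε
  obtain ⟨r1, h1⟩ := hup ε hε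
  obtain ⟨r2, h2⟩ := hlow ε hε
  exact ⟨max r1 r2, fun r hr a b hab =>
    ⟨h2 r ((le_max_right _ _).trans hr) a b hab, h1 r ((le_max_left _ _).trans hr) a b hab⟩⟩

/-- Corollary 4.2. For a linearly repetitive tiling `T` and a
subadditive, asymptotically `T`-invariant function `w` on boxes, the means `w(B_n)/|B_n|`
converge along every sequence of `r_n`-boxes with `r_n → ∞`, with a limit independent
of the sequence. -/
theorem tiling_subadditive_ergodic (d : ℕ) (T : Set (Set (Pt d)))
    (hT : IsTiling d T)
    (hadm : Admissible d (patternClassesOf d T))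
    (hlr : LinearlyRepetitive d (patternClassesOf d T))
    (w : Set (Pt d) → ℝ)
    (hw : ∃ (dw rw : ℝ) (cw ew : ℝ → ℝ),
      BoxFnSubadditive d w dw rw cw ∧ AsympTilingInvariant d T w rw ew) :
    ∃ L : ℝ, ∀ (B : ℕ → Set (Pt d)) (r : ℕ → ℝ),
      (∀ n, IsRBox d (r n) (B n)) → Tendsto r atTop atTop →
      Tendsto (fun n => w (B n) / volOf d (B n)) atTop (nhds L) := by
  rcases Nat.eq_zero_or_pos d with rfl | hd
  · refine ⟨w Set.univ / volOf 0 Set.univ, fun B r hB _ => ?_⟩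
    have h1 : ∀ n, B n = Set.univ := by
      intro n
      obtain ⟨a, b, -, h, -⟩ := hB n
      rw [h]
      exact Set.eq_univ_of_forall (fun x j => j.elim0)
    simp only [h1]
    exact tendsto_const_nhds
  · have : NeZero d := ⟨hd.ne'⟩
    obtain ⟨dw, rw0, cw, ew, hw, hinv⟩ := hw
    obtain ⟨L, hL⟩ := main_pos d T hT hadm hlr w dw rw0 cw ew hw hinv
    refine ⟨L, fun B r hB hr => ?_⟩
    rw [Metric.tendsto_atTop]
    intro ε hε
    obtain ⟨r0, h0⟩ := hL (ε / 2) (by linarith)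
    obtain ⟨N, hN⟩ := eventually_atTop.1 (hr.eventually_ge_atTop r0)
    refine ⟨N, fun n hn => ?_⟩
    obtain ⟨a, b, hab, hBn, hlen⟩ := hB n
    obtain ⟨k1, k2⟩ := h0 (r n) (hN n hn) a b hlen
    have hV : 0 < ∏ j, (b j - a j) := Finset.prod_pos (fun j _ => by linarith [hab j])
    rw [hBn, boxSet_vol d a b (fun j => (hab j).le), Real.dist_eq, abs_lt]
    rw [← le_div_iff₀ hV] at k1
    rw [← div_le_iff₀ hV] at k2
    constructor <;> linarith

end
end
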